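/- Let c be a positive integer not divisible by 32, and let m, n be integers. Then |S(m,n;c)| ≤ c^{1/2} · gcd(m,n,c)^{1/2} · 2^{ω(c)}. -/

import Mathlib

/-- The Kloosterman sum `S(m,n;c)` (a real number). -/
noncomputable def Kloosterman (m n : ℤ) (c : ℕ) : ℝ :=
  ∑ a ∈ (Finset.range c).filter (fun a => Nat.Coprime a c),
    (Complex.exp (2 * Real.pi * Complex.I *
      (((m * a + n * (((a : ZMod c)⁻¹).val : ℤ) : ℤ) : ℂ) / c))).re

/-!
The Chinese remainder theorem makes Kloosterman sums multiplicative in the modulus, up to unit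
factors in `m` and `n`, so `c` may be taken to be a prime power `p ^ k`. If `p` divides both `m` and
`n`, the sum is at most `p` times one to the modulus `p ^ (k - 1)`. Otherwise the bound to prove is
`2 * √(p ^ k)`, in three cases.

* For `p = 2` and `k ≤ 4` the number of terms, `2 ^ (k - 1)`, already satisfies it. This is where
  `32 ∤ c` comes from.
* For `p` odd and `k ≥ 2`, the sum localizes at the critical points of the phase `m u + n u⁻¹`, of
  which there are at most two modulo a suitable power of `p`; for odd `k` a quadratic Gauss sum
  remains around each of them.
* For `p` odd and `k = 1` it is Weil's bound. Weighting the monic polynomials over `𝔽_q` by a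
  multiplicative function that encodes the Kloosterman sum gives the L-function
  `1 + S T + q T ^ 2 = (1 - α T) (1 - β T)`, and the Kloosterman sum over `𝔽_{q ^ j}` is
  `-(α ^ j + β ^ j)`. For even `j`, Stepanov's method bounds the number of solutions over this field
  of `m x + n x⁻¹ = y ^ q - y + t` for every `t`, so that these sums are `O(q ^ (j / 2))`. Together
  with `α β = q` this forces `|α| = |β| = √q`.
-/

lemma card_mul_sum_comp_of_surjective {G H : Type*} [Group G] [Group H] [Fintype G] [Fintype H]
    {π : G →* H} (hπ : Function.Surjective π) (g : H → ℂ) :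
    Fintype.card H * ∑ u, g (π u) = Fintype.card G * ∑ v, g v := by
  have hshift (v : H) : ∑ u, g (π u) = ∑ u, g (π u * v) := by
    obtain ⟨u₀, rfl⟩ := hπ v
    simpa only [Equiv.coe_mulRight, map_mul] using
      (Equiv.sum_comp (Equiv.mulRight u₀) fun u ↦ g (π u)).symm
  calc Fintype.card H * ∑ u, g (π u)
      = ∑ v, ∑ u, g (π u * v) := by
        rw [← Finset.sum_congr rfl fun v _ ↦ hshift v, Finset.sum_const, Finset.card_univ,
          nsmul_eq_mul]
    _ = ∑ u : G, ∑ v, g v := by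
        rw [Finset.sum_comm]
        exact Finset.sum_congr rfl fun u _ ↦ Equiv.sum_comp (Equiv.mulLeft (π u)) g
    _ = Fintype.card G * ∑ v, g v := by
        rw [Finset.sum_const, Finset.card_univ, nsmul_eq_mul]

/-- The Kloosterman sum `∑ u, χ (m u + n u⁻¹)` over the units of a ring with finitely many units.
The classical `S(m, n; c)` is the case of the additive character `x ↦ e(x / c)` of `ZMod c`; sums
over finite fields and over products of rings enter in its estimation. -/
noncomputable def kloostermanSum {R : Type*} [CommRing R] [Fintype Rˣ] (χ : AddChar R ℂ)
    (m n : R) : ℂ :=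
  ∑ u : Rˣ, χ (m * u + n * (u⁻¹ : Rˣ))

section Basic

variable {R : Type*} [CommRing R] [Fintype Rˣ] (χ : AddChar R ℂ) (m n : R)

lemma kloostermanSum_comm : kloostermanSum χ m n = kloostermanSum χ n m := by
  rw [kloostermanSum, ← Equiv.sum_comp (Equiv.inv Rˣ)]
  refine Finset.sum_congr rfl fun u _ ↦ ?_
  rw [Equiv.inv_apply, inv_inv, add_comm]

lemma norm_kloostermanSum_le_card [Finite R] : ‖kloostermanSum χ m n‖ ≤ Fintype.card Rˣ := by
  refine (norm_sum_le _ _).trans_eq ?_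
  simp only [AddChar.norm_apply, Finset.sum_const, nsmul_eq_mul, mul_one, Finset.card_univ]

lemma kloostermanSum_mulShift (a : R) :
    kloostermanSum (χ.mulShift a) m n = kloostermanSum χ (a * m) (a * n) :=
  Finset.sum_congr rfl fun u _ ↦ by rw [AddChar.mulShift_apply, mul_add, mul_assoc, mul_assoc]

variable {χ}

lemma kloostermanSum_eq_mul_of_ringEquiv_prod {R₁ R₂ : Type*} [CommRing R₁] [CommRing R₂]
    [Fintype R₁ˣ] [Fintype R₂ˣ] {χ₁ : AddChar R₁ ℂ} {χ₂ : AddChar R₂ ℂ} (e : R ≃+* R₁ × R₂)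
    (hχ : ∀ x, χ x = χ₁ (e x).1 * χ₂ (e x).2) :
    kloostermanSum χ m n =
      kloostermanSum χ₁ (e m).1 (e n).1 * kloostermanSum χ₂ (e m).2 (e n).2 := by
  simp only [kloostermanSum]
  rw [Fintype.sum_mul_sum, ← Fintype.sum_prod_type']
  refine Fintype.sum_equiv ((Units.mapEquiv e.toMulEquiv).trans MulEquiv.prodUnits).toEquiv _ _
    fun u ↦ ?_
  rw [hχ, map_add, map_mul, map_mul]
  rfl

lemma card_mul_kloostermanSum_of_surjective {S : Type*} [CommRing S] [Fintype Sˣ]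
    {χ' : AddChar S ℂ} {f : R →+* S} (hf : Function.Surjective (Units.map (f : R →* S))) {a : R}
    (hχ : ∀ x, χ (a * x) = χ' (f x)) :
    Fintype.card Sˣ * kloostermanSum χ (a * m) (a * n) =
      Fintype.card Rˣ * kloostermanSum χ' (f m) (f n) := by
  simp only [kloostermanSum]
  rw [← card_mul_sum_comp_of_surjective hf]
  congr 1
  refine Finset.sum_congr rfl fun u _ ↦ ?_
  rw [mul_assoc, mul_assoc, ← mul_add, hχ, map_add, map_mul, map_mul, ← map_inv]
  rfl

end Basic

/-! ### Stepanov's method -/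

section Stepanov

open Polynomial Bivariate

lemma coeff_zero_and_eval_divX_eq_zero {R : Type*} [CommRing R] {g : R[X]} (hg : g.Monic)
    {P : R[X][Y]} (hP : (P.coeff 0).degree < g.degree) (heval : P.eval g = 0) :
    P.coeff 0 = 0 ∧ P.divX.eval g = 0 := by
  have hsplit : g * P.divX.eval g + P.coeff 0 = 0 := by
    rw [← heval]
    conv_rhs => rw [← divX_mul_X_add P]
    simp only [eval_add, eval_mul, eval_X, eval_C, mul_comm]
  have hcoeff : P.coeff 0 = 0 := by
    by_contra hne
    exact hg.not_dvd_of_degree_lt hne hP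
      ((dvd_add_right (dvd_mul_right g _)).mp (hsplit ▸ dvd_zero g))
  rw [hcoeff, add_zero] at hsplit
  exact ⟨hcoeff, hg.mul_right_eq_zero_iff.mp hsplit⟩

-- Uniqueness of expansions in base `g`.
lemma eq_zero_of_eval_monic_eq_zero {R : Type*} [CommRing R] {g : R[X]} (hg : g.Monic)
    {P : R[X][Y]} (hP : ∀ j, (P.coeff j).degree < g.degree) (heval : P.eval g = 0) : P = 0 := by
  ext1 j
  rw [coeff_zero]
  induction j generalizing P with
  | zero => exact (coeff_zero_and_eval_divX_eq_zero hg (hP 0) heval).1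
  | succ j ih =>
    rw [← coeff_divX]
    refine ih (fun i ↦ ?_) (coeff_zero_and_eval_divX_eq_zero hg (hP 0) heval).2
    rw [coeff_divX]
    exact hP (i + 1)

lemma eq_zero_of_sq_eq_C_mul_sq {D : Type*} [CommRing D] [IsDomain D] [IsIntegrallyClosed D]
    {f : D} (hf : ¬ IsSquare f) {G R S : D[X]} (hG : G.Monic) (h : R ^ 2 = C f * G * S ^ 2) :
    R = 0 ∧ S = 0 := by
  suffices hS : S = 0 by
    subst hS
    exact ⟨by simpa using h, rfl⟩
  by_contra hS
  have hlead : R.leadingCoeff ^ 2 = f * S.leadingCoeff ^ 2 := by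
    simpa [hG.leadingCoeff] using congrArg leadingCoeff h
  obtain ⟨t, ht⟩ : S.leadingCoeff ∣ R.leadingCoeff :=
    (IsIntegrallyClosed.pow_dvd_pow_iff two_ne_zero).mp ⟨f, by rw [hlead, mul_comm]⟩
  refine hf ⟨t, mul_right_cancel₀ (pow_ne_zero 2 (leadingCoeff_ne_zero.mpr hS)) ?_⟩
  rw [← hlead, ht]
  ring

/-- The bivariate polynomials of degree at most `a` in the inner variable `X` and at most `c` in
the outer variable `Y`. -/
def bidegreeLE (F : Type*) [Field F] (a c : ℕ) : Submodule F F[X][Y] where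
  carrier := {P | P.natDegree ≤ c ∧ ∀ j, (P.coeff j).natDegree ≤ a}
  zero_mem' := by simp
  add_mem' hP hR := ⟨natDegree_add_le_of_degree_le hP.1 hR.1, fun j ↦ by
    rw [coeff_add]
    exact natDegree_add_le_of_degree_le (hP.2 j) (hR.2 j)⟩
  smul_mem' t P hP := ⟨(natDegree_smul_le t P).trans hP.1, fun j ↦ by
    rw [coeff_smul]
    exact (natDegree_smul_le t _).trans (hP.2 j)⟩

variable {F : Type*} [Field F]

lemma C_mem_bidegreeLE (f : F[X]) : C f ∈ bidegreeLE F f.natDegree 0 := by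
  refine ⟨natDegree_C f |>.le, fun j ↦ ?_⟩
  rw [coeff_C]
  split_ifs <;> simp

lemma map_C_mem_bidegreeLE (g : F[X]) : g.map C ∈ bidegreeLE F 0 g.natDegree :=
  ⟨natDegree_map_le, fun j ↦ by simp⟩

lemma mul_mem_bidegreeLE {a b c d : ℕ} {P R : F[X][Y]} (hP : P ∈ bidegreeLE F a c)
    (hR : R ∈ bidegreeLE F b d) : P * R ∈ bidegreeLE F (a + b) (c + d) := by
  refine ⟨natDegree_mul_le_of_le hP.1 hR.1, fun j ↦ ?_⟩
  rw [coeff_mul]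
  exact natDegree_sum_le_of_forall_le _ _ fun i _ ↦ natDegree_mul_le_of_le (hP.2 _) (hR.2 _)

lemma map_mem_bidegreeLE {a c : ℕ} {P : F[X][Y]} (hP : P ∈ bidegreeLE F a c) (φ : F →+* F) :
    P.map (mapRingHom φ) ∈ bidegreeLE F a c :=
  ⟨natDegree_map_le.trans hP.1, fun j ↦ by
    rw [coeff_map]
    exact natDegree_map_le.trans (hP.2 j)⟩

open scoped Classical in
/-- A bivariate polynomial of bounded bidegree, given by its array of coefficients. -/
noncomputable def bidegreeLEEquiv (a c : ℕ) :
    bidegreeLE F a c ≃ₗ[F] (Fin (c + 1) → Fin (a + 1) → F) where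
  toFun P i j := (P.1.coeff i).coeff j
  map_add' P R := by ext; simp
  map_smul' t P := by ext; simp
  invFun v := ⟨ofFn (c + 1) fun i ↦ ofFn (a + 1) (v i), by
    refine ⟨Nat.le_of_lt_succ (ofFn_natDegree_lt (by omega) _), fun j ↦ ?_⟩
    by_cases hj : j < c + 1
    · rw [ofFn_coeff_eq_val_of_lt _ hj]
      exact Nat.le_of_lt_succ (ofFn_natDegree_lt (by omega) _)
    · simp [ofFn_coeff_eq_zero_of_ge _ (not_lt.mp hj)]⟩
  left_inv P := by
    have hinner (i : ℕ) : ofFn (a + 1) (fun j ↦ (P.1.coeff i).coeff j) = P.1.coeff i :=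
      ofFn_comp_toFn_eq_id_of_natDegree_lt (Nat.lt_succ_of_le (P.2.2 i))
    simp only [hinner]
    exact Subtype.ext (ofFn_comp_toFn_eq_id_of_natDegree_lt (Nat.lt_succ_of_le P.2.1))
  right_inv v := by
    ext i j
    change ((ofFn (c + 1) fun i ↦ ofFn (a + 1) (v i)).coeff i).coeff j = v i j
    rw [ofFn_coeff_eq_val_of_lt _ i.2, ofFn_coeff_eq_val_of_lt _ j.2]

lemma natDegree_aevalAeval_le {a c : ℕ} {P : F[X][Y]} (hP : P ∈ bidegreeLE F a c) (g h : F[X]) :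
    (P.aevalAeval g h).natDegree ≤ a * g.natDegree + c * h.natDegree := by
  have hexpand : P.aevalAeval g h =
      ∑ j ∈ Finset.range (c + 1), (P.coeff j).comp g * h ^ j := by
    conv_lhs => rw [P.as_sum_range_C_mul_X_pow' (Nat.lt_succ_of_le hP.1)]
    simp only [map_sum, map_mul, map_pow, aevalAeval_C, aevalAeval_Y, comp, aeval_def]
    rfl
  rw [hexpand]
  refine natDegree_sum_le_of_forall_le _ _ fun j hj ↦ natDegree_mul_le_of_le ?_ ?_
  · rw [natDegree_comp]
    exact Nat.mul_le_mul_right _ (hP.2 j)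
  · exact natDegree_pow_le_of_le _ le_rfl |>.trans
      (Nat.mul_le_mul_right _ (Finset.mem_range_succ_iff.mp hj))

-- Linear algebra: there are more coefficients to choose than coefficients to cancel.
lemma exists_ne_zero_aevalAeval_add_mul_eq_zero {a b c N : ℕ} (g h u : F[X])
    (haN : a * g.natDegree + c * h.natDegree < N)
    (hbN : b * g.natDegree + c * h.natDegree + u.natDegree < N)
    (hN : N < (c + 1) * (a + 1) + (c + 1) * (b + 1)) :
    ∃ R ∈ bidegreeLE F a c, ∃ S ∈ bidegreeLE F b c, (R ≠ 0 ∨ S ≠ 0) ∧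
      R.aevalAeval g h + S.aevalAeval g h * u = 0 := by
  let ev (d : ℕ) : (Fin (c + 1) → Fin (d + 1) → F) →ₗ[F] F[X] :=
    (aevalAeval g h).toLinearMap ∘ₗ (bidegreeLE F d c).subtype ∘ₗ
      (bidegreeLEEquiv d c).symm.toLinearMap
  let Φ := (ev a).coprod (LinearMap.mulRight F u ∘ₗ ev b)
  have hΦ v : Φ v ∈ degreeLT F N := by
    refine mem_degreeLT.mpr (degree_le_natDegree.trans_lt (Nat.cast_lt.mpr ?_))
    exact (natDegree_add_le_of_le (natDegree_aevalAeval_le (Subtype.property _) g h)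
      (natDegree_mul_le_of_le (natDegree_aevalAeval_le (Subtype.property _) g h) le_rfl)).trans_lt
        (max_lt haN hbN)
  have : FiniteDimensional F (degreeLT F N) := .equiv (degreeLTEquiv F N).symm
  obtain ⟨⟨v, w⟩, hker, hne⟩ := (Submodule.ne_bot_iff _).mp
    (LinearMap.ker_ne_bot_of_finrank_lt (f := Φ.codRestrict (degreeLT F N) hΦ) (by
      simpa [Module.finrank_prod, Module.finrank_pi_fintype, (degreeLTEquiv F N).finrank_eq]
        using hN))
  refine ⟨_, ((bidegreeLEEquiv a c).symm v).2, _, ((bidegreeLEEquiv b c).symm w).2, ?_,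
    congrArg Subtype.val (LinearMap.mem_ker.mp hker)⟩
  contrapose! hne
  simpa using hne

lemma aevalAeval_X_left (P : F[X][Y]) (h : F[X]) : P.aevalAeval X h = P.eval h := by
  have halg : aevalAeval X h = (aeval h : F[X][Y] →ₐ[F[X]] F[X]).restrictScalars F :=
    (aevalAevalEquiv F F[X]).symm.injective (by simp)
  exact (DFunLike.congr_fun halg P).trans (by simp)

lemma eval_aevalAeval (P : F[X][Y]) (g h : F[X]) (y : F) :
    (P.aevalAeval g h).eval y = P.evalEval (g.eval y) (h.eval y) := by
  have hcomp : (aeval y).comp (aevalAeval g h) = aevalAeval (R := F) (g.eval y) (h.eval y) :=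
    (aevalAevalEquiv F F).symm.injective (by simp)
  rw [← coe_aevalAeval_eq_evalEval]
  exact DFunLike.congr_fun hcomp P

-- The square of the relation is a relation between expansions in base `X ^ p ^ k`.
lemma eq_zero_of_eval_X_pow_add_mul_eq_zero {p : ℕ} [ExpChar F p] {k A b c : ℕ}
    (hQ : p ^ k = 2 * A + 1) {f : F[X]} (hf : f.Monic) (hsq : ¬ IsSquare f)
    (hdeg : f.natDegree + 2 * b ≤ 2 * A) {R S : F[X][Y]} (hR : R ∈ bidegreeLE F A c)
    (hS : S ∈ bidegreeLE F b c)
    (h : R.eval (X ^ p ^ k) + S.eval (X ^ p ^ k) * f ^ (A + 1) = 0) : R = 0 ∧ S = 0 := by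
  let G : F[X][Y] := (f.map (iterateFrobenius F p k)).map C
  have hG : G.eval (X ^ p ^ k) = f ^ p ^ k := by
    rw [← map_iterateFrobenius_expand p f k, map_expand, eval_map]
    rfl
  refine eq_zero_of_sq_eq_C_mul_sq hsq ((hf.map _).map _) (G := G) (sub_eq_zero.mp ?_)
  refine eq_zero_of_eval_monic_eq_zero (monic_X_pow (p ^ k)) (fun j ↦ ?_) ?_
  · have hdegR := (mul_mem_bidegreeLE hR hR).2 j
    have hdegS := (mul_mem_bidegreeLE (mul_mem_bidegreeLE (C_mem_bidegreeLE f)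
      (map_C_mem_bidegreeLE (f.map (iterateFrobenius F p k)))) (mul_mem_bidegreeLE hS hS)).2 j
    rw [degree_X_pow, coeff_sub, sq, sq]
    refine (degree_le_natDegree.trans
      (Nat.cast_le.mpr (natDegree_sub_le_of_le hdegR hdegS))).trans_lt (Nat.cast_lt.mpr ?_)
    omega
  · have hpow : f * f ^ p ^ k = (f ^ (A + 1)) ^ 2 := by
      rw [hQ]
      ring
    simp only [eval_sub, eval_mul, eval_pow, eval_C, hG, hpow, eq_neg_of_add_eq_zero_left h]
    ring

variable [Fintype F] {p k : ℕ} [Fact p.Prime] [CharP F p]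

lemma iterateFrobenius_iterateFrobenius_of_card (hF : Fintype.card F = (p ^ k) ^ 2) (x : F) :
    iterateFrobenius F p k (iterateFrobenius F p k x) = x := by
  rw [iterateFrobenius_def, iterateFrobenius_def, ← pow_mul, ← sq, ← hF, FiniteField.pow_card]

lemma iterateFrobenius_pow_of_isSquare {A : ℕ} (hQ : p ^ k = 2 * A + 1)
    (hF : Fintype.card F = (p ^ k) ^ 2) {z : F} (hz : IsSquare z) :
    iterateFrobenius F p k (z ^ (A + 1)) = z ^ (A + 1) := by
  obtain ⟨x, rfl⟩ := hz
  have hpow : (x * x) ^ (A + 1) = x * iterateFrobenius F p k x := by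
    rw [iterateFrobenius_def, hQ]
    ring
  rw [hpow, map_mul, iterateFrobenius_iterateFrobenius_of_card hF, mul_comm]

-- Frobenius carries a relation between values at `(y ^ Q, y)` to one at `(y, y ^ Q)`.
lemma eval_map_iterateFrobenius_add_mul_eq_zero (hF : Fintype.card F = (p ^ k) ^ 2)
    {R S : F[X][Y]} {u : F[X]}
    (hrel : R.aevalAeval (X ^ p ^ k) X + S.aevalAeval (X ^ p ^ k) X * u = 0) {y : F}
    (hy : iterateFrobenius F p k (u.eval y) = u.eval y) :
    ((R.map (mapRingHom (iterateFrobenius F p k))).eval (X ^ p ^ k) +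
      (S.map (mapRingHom (iterateFrobenius F p k))).eval (X ^ p ^ k) * u).eval y = 0 := by
  set φ := iterateFrobenius F p k with hφ
  have hφy : y ^ p ^ k = φ y := (iterateFrobenius_def p k y).symm
  have htwist (P : F[X][Y]) : ((P.map (mapRingHom φ)).eval (X ^ p ^ k)).eval y =
      φ ((P.aevalAeval (X ^ p ^ k) X).eval y) := by
    rw [← aevalAeval_X_left, eval_aevalAeval, eval_aevalAeval, ← map_mapRingHom_evalEval]
    simp only [eval_X, eval_pow, hφy, hφ, iterateFrobenius_iterateFrobenius_of_card hF]
  rw [eval_add, eval_mul, htwist, htwist, ← hy, ← map_mul, ← map_add, ← eval_mul, ← eval_add,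
    hrel, eval_zero, map_zero]

-- The auxiliary polynomial is the Frobenius twist of a vanishing `R + S f ^ ((Q + 1) / 2)`, where
-- `Q = p ^ k`: over a field with `Q ^ 2` elements `z ^ ((Q + 1) / 2)` lies in the subfield with `Q`
-- elements as soon as `z` is a square.
theorem two_mul_card_le_of_isSquare_eval {r : ℕ} (hF : Fintype.card F = (p ^ k) ^ 2)
    (hodd : Odd (p ^ k)) {f : F[X]} (hf : f.Monic) (hsq : ¬ IsSquare f)
    (hdeg : f.natDegree ≤ 2 * r) (hr : 2 * r < p ^ k) {T : Finset F}
    (hT : ∀ y ∈ T, IsSquare (f.eval y)) :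
    2 * T.card ≤ (p ^ k) ^ 2 + 4 * r * p ^ k := by
  obtain ⟨A, hQ⟩ := hodd
  obtain ⟨b, rfl⟩ : ∃ b, A = b + r := ⟨A - r, by omega⟩
  have hdegpow : (f ^ (b + r + 1)).natDegree ≤ r * p ^ k + r :=
    (natDegree_pow_le_of_le _ hdeg).trans_eq (by rw [hQ]; ring)
  obtain ⟨R, hR, S, hS, hne, hrel⟩ := exists_ne_zero_aevalAeval_add_mul_eq_zero
    (a := b + r) (b := b) (c := b + r + r) (X ^ p ^ k : F[X]) X (f ^ (b + r + 1))
    (N := (b + r) * p ^ k + (b + r + r) + r + 1)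
    (by simp only [natDegree_X_pow, natDegree_X]; lia)
    (by simp only [natDegree_X_pow, natDegree_X]; lia)
    (by rw [hQ]; nlinarith)
  set φ := iterateFrobenius F p k
  set Rφ := R.map (mapRingHom φ)
  set Sφ := S.map (mapRingHom φ)
  set g := Rφ.eval (X ^ p ^ k) + Sφ.eval (X ^ p ^ k) * f ^ (b + r + 1) with hg
  have hRφ : Rφ ∈ bidegreeLE F (b + r) (b + r + r) := map_mem_bidegreeLE hR φ
  have hSφ : Sφ ∈ bidegreeLE F b (b + r + r) := map_mem_bidegreeLE hS φ
  have hg0 : g ≠ 0 := fun h0 ↦ by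
    have hinj : Function.Injective (mapRingHom φ) := map_injective φ φ.injective
    obtain ⟨hR0, hS0⟩ := eq_zero_of_eval_X_pow_add_mul_eq_zero hQ hf hsq (by omega) hRφ hSφ h0
    rw [Polynomial.map_eq_zero_iff hinj] at hR0 hS0
    exact hne.elim (· hR0) (· hS0)
  have hroots : T.val ⊆ g.roots := fun y hy ↦ by
    refine (mem_roots hg0).mpr (eval_map_iterateFrobenius_add_mul_eq_zero hF hrel ?_)
    rw [eval_pow]
    exact iterateFrobenius_pow_of_isSquare hQ hF (hT y hy)
  have hdegg : g.natDegree ≤ b + r + r * p ^ k + (b + r + r) * p ^ k := by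
    rw [hg, ← aevalAeval_X_left, ← aevalAeval_X_left]
    refine natDegree_add_le_of_degree_le ((natDegree_aevalAeval_le hRφ _ _).trans ?_)
      ((natDegree_mul_le_of_le (natDegree_aevalAeval_le hSφ _ _) hdegpow).trans ?_)
    all_goals
      simp only [natDegree_X_pow, natDegree_X]
      lia
  have hcard := (card_le_degree_of_subset_roots hroots).trans hdegg
  rw [hQ] at hcard ⊢
  linarith

end Stepanov

/-! ### Kloosterman sums over fields of square order -/

section CharacterSum

open Polynomial

lemma not_isSquare_sq_sub_C {F : Type*} [Field F] (h2 : (2 : F) ≠ 0) {h : F[X]}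
    (hh : 0 < h.natDegree) {c : F} (hc : c ≠ 0) : ¬ IsSquare (h ^ 2 - C c) := by
  rintro ⟨t, ht⟩
  have hfactor : (h - t) * (h + t) = C c := by linear_combination ht
  have hunit : IsUnit ((h - t) * (h + t)) := hfactor ▸ isUnit_C.mpr hc.isUnit
  have hconst : (C 2 * h).natDegree = 0 := by
    have hsum : C 2 * h = (h - t) + (h + t) := by
      rw [C_ofNat]
      ring
    rw [hsum]
    exact Nat.le_zero.mp (natDegree_add_le_of_degree_le
      (natDegree_eq_zero_of_isUnit (isUnit_of_mul_isUnit_left hunit)).le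
      (natDegree_eq_zero_of_isUnit (isUnit_of_mul_isUnit_right hunit)).le)
  rw [natDegree_C_mul h2] at hconst
  exact hh.ne' hconst

lemma norm_sum_addChar_le_of_card_fiber_le {F Z : Type*} [AddCommGroup F] [Fintype F]
    [DecidableEq F] [Fintype Z] {ψ : AddChar F ℂ} (hψ : ψ ≠ 1) (g : Z → F) {B : ℕ}
    (hB : ∀ t, ({z | g z = t} : Finset Z).card ≤ B) :
    ‖∑ z, ψ (g z)‖ ≤ Fintype.card F * B - Fintype.card Z := by
  set N : F → ℕ := fun t ↦ ({z | g z = t} : Finset Z).card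
  have hfibre : ∑ z, ψ (g z) = ∑ t, (N t : ℂ) * ψ t := by
    rw [← Finset.sum_fiberwise (g := g)]
    refine Finset.sum_congr rfl fun t _ ↦ ?_
    rw [Finset.sum_congr rfl fun z hz ↦ by rw [(Finset.mem_filter.mp hz).2], Finset.sum_const,
      nsmul_eq_mul]
  have hcentre : ∑ z, ψ (g z) = -∑ t, ((B - N t : ℕ) : ℂ) * ψ t := by
    simp only [hfibre, Nat.cast_sub (hB _), sub_mul, Finset.sum_sub_distrib, ← Finset.mul_sum,
      AddChar.sum_eq_zero_of_ne_one hψ, N]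
    ring
  have hcard : ∑ t, N t = Fintype.card Z := (Finset.card_eq_sum_card_fiberwise
    (f := g) (t := Finset.univ) (by simp)).symm
  calc ‖∑ z, ψ (g z)‖ ≤ ∑ t, ((B - N t : ℕ) : ℝ) := by
        rw [hcentre, norm_neg]
        refine (norm_sum_le _ _).trans_eq (Finset.sum_congr rfl fun t _ ↦ ?_)
        rw [norm_mul, AddChar.norm_apply, mul_one, Complex.norm_natCast]
    _ = Fintype.card F * B - Fintype.card Z := by
        rw [← hcard]
        push_cast [hB, N]
        simp

variable {F : Type*} [Field F] [Fintype F] [DecidableEq F]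

lemma card_unit_mul_add_mul_inv_eq_le_two {m : F} (n t : F) (hm : m ≠ 0) :
    ({x | m * x + n * (x⁻¹ : Fˣ) = t} : Finset Fˣ).card ≤ 2 := by
  rcases Finset.eq_empty_or_nonempty ({x | m * x + n * (x⁻¹ : Fˣ) = t} : Finset Fˣ)
    with hempty | ⟨x, hx⟩
  · rw [hempty, Finset.card_empty]
    exact Nat.zero_le 2
  have hx := (Finset.mem_filter.mp hx).2
  refine (Finset.card_le_card_of_injOn (t := {(x : F), n / (m * x)}) Units.val (fun z hz ↦ ?_)
    Units.val_injective.injOn).trans Finset.card_le_two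
  have hz := (Finset.mem_filter.mp hz).2
  have hprod : ((z : F) - x) * (m * x * z - n) = 0 := by
    rw [Units.val_inv_eq_inv_val] at hx hz
    field_simp at hx hz
    linear_combination (x : F) * hz - (z : F) * hx
  rcases mul_eq_zero.mp hprod with h | h
  · simp [sub_eq_zero.mp h]
  · simp [eq_div_iff (mul_ne_zero hm x.ne_zero), ← sub_eq_zero.mp h, mul_comm]

-- A solution `x` exists only if the discriminant `h(y)² - 4mn` is a square.
lemma card_unit_mul_add_mul_inv_eq_eval_le {p k : ℕ} [Fact p.Prime] [CharP F p]
    (hF : Fintype.card F = (p ^ k) ^ 2) (hodd : Odd (p ^ k)) {m n : F}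
    (hm : m ≠ 0) (hn : n ≠ 0) {h : F[X]} (hh : h.Monic) (hh0 : 0 < h.natDegree)
    (hhQ : 2 * h.natDegree < p ^ k) :
    ({z | m * z.1 + n * (z.1⁻¹ : Fˣ) = h.eval z.2} : Finset (Fˣ × F)).card ≤
      (p ^ k) ^ 2 + 4 * h.natDegree * p ^ k := by
  have h2 : (2 : F) ≠ 0 := Ring.two_ne_zero fun hchar ↦ by
    have heven := FiniteField.even_card_of_char_two hchar
    rw [hF, Nat.odd_iff.mp hodd.pow] at heven
    exact one_ne_zero heven
  have h4 : 4 * (m * n) ≠ 0 := by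
    rw [show (4 : F) = 2 * 2 by norm_num]
    exact mul_ne_zero (mul_ne_zero h2 h2) (mul_ne_zero hm hn)
  have hdeg : (h ^ 2).natDegree = 2 * h.natDegree := natDegree_pow h 2
  have hmonic : (h ^ 2 - C (4 * (m * n))).Monic :=
    (hh.pow 2).sub_of_left (degree_C_le.trans_lt (natDegree_pos_iff_degree_pos.mp (by omega)))
  set T : Finset F := {y | IsSquare ((h ^ 2 - C (4 * (m * n))).eval y)}
  have hT := two_mul_card_le_of_isSquare_eval hF hodd hmonic (not_isSquare_sq_sub_C h2 hh0 h4)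
    (by rw [natDegree_sub_C, hdeg]) hhQ (T := T) fun y hy ↦ (Finset.mem_filter.mp hy).2
  refine (Finset.card_le_mul_card_image_of_maps_to (f := Prod.snd) (t := T) (fun z hz ↦ ?_) 2
    fun y _ ↦ ?_).trans hT
  · have hz := (Finset.mem_filter.mp hz).2
    refine Finset.mem_filter.mpr ⟨Finset.mem_univ _, m * z.1 - n * (z.1⁻¹ : Fˣ), ?_⟩
    rw [eval_sub, eval_pow, eval_C, ← hz]
    linear_combination (4 * m * n) * z.1.mul_inv
  · refine (Finset.card_le_card_of_injOn Prod.fst (fun z hz ↦ ?_) fun z hz z' hz' hfst ↦ ?_).trans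
      (card_unit_mul_add_mul_inv_eq_le_two n (h.eval y) hm)
    · simp_all
    · simp_all [Prod.ext_iff]

theorem norm_kloostermanSum_le_of_card_eq_sq {p k q : ℕ} [Fact p.Prime] [CharP F p]
    (hF : Fintype.card F = (p ^ k) ^ 2) (hodd : Odd (p ^ k)) (hq : 2 ≤ q) (hqQ : 2 * q < p ^ k)
    {ψ : AddChar F ℂ} (hψ : ψ ≠ 1) (hψq : ∀ y, ψ (y ^ q) = ψ y) {m n : F} (hm : m ≠ 0)
    (hn : n ≠ 0) : ‖kloostermanSum ψ m n‖ ≤ 4 * q * p ^ k + 1 := by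
  let g (z : Fˣ × F) : F := m * z.1 + n * (z.1⁻¹ : Fˣ) - (z.2 ^ q - z.2)
  have hfibre (t : F) : ({z | g z = t} : Finset (Fˣ × F)).card ≤
      (p ^ k) ^ 2 + 4 * q * p ^ k := by
    have hlow : (-X + C t : F[X]).natDegree < q := by
      refine (natDegree_add_C.trans (natDegree_neg X)).trans_lt ?_
      rw [natDegree_X]
      omega
    have hmonic : (X ^ q + (-X + C t) : F[X]).Monic :=
      monic_X_pow_add (degree_le_natDegree.trans_lt (Nat.cast_lt.mpr hlow))
    have hdeg : (X ^ q + (-X + C t) : F[X]).natDegree = q := by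
      rw [natDegree_add_eq_left_of_natDegree_lt] <;> rw [natDegree_X_pow]
      exact hlow
    have hcount := card_unit_mul_add_mul_inv_eq_eval_le hF hodd hm hn hmonic (by omega) (by omega)
    rw [hdeg] at hcount
    refine (Finset.card_le_card fun z hz ↦ ?_).trans hcount
    simp only [g, Finset.mem_filter_univ, eval_add, eval_neg, eval_pow, eval_X, eval_C] at hz ⊢
    linear_combination hz
  have hsum : ∑ z, ψ (g z) = Fintype.card F * kloostermanSum ψ m n := by
    have hcancel (y : F) : ψ (y ^ q - y) = 1 := by
      rw [AddChar.map_sub_eq_div, hψq, div_self (ψ.val_isUnit y).ne_zero]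
    simp only [g, AddChar.map_sub_eq_div, Fintype.sum_prod_type, hcancel]
    simp [kloostermanSum, Finset.mul_sum]
  have hbound := norm_sum_addChar_le_of_card_fiber_le hψ g hfibre
  have hpos : (0 : ℝ) < Fintype.card F := by exact_mod_cast Fintype.card_pos
  rw [hsum, norm_mul, Complex.norm_natCast, Fintype.card_prod, Fintype.card_units,
    Nat.cast_mul, Nat.cast_sub Fintype.card_pos] at hbound
  refine le_of_mul_le_mul_left (hbound.trans_eq ?_) hpos
  push_cast [hF]
  ring

end CharacterSum

/-! ### Newton's identities for weighted sums over monic polynomials -/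

section NewtonIdentity

open Polynomial

/-- The monic polynomials of degree `d` over a finite commutative ring, parametrized by their `d`
lower coefficients. -/
noncomputable def monicsOfDegree (k : Type*) [CommRing k] [Fintype k] [DecidableEq k] (d : ℕ) :
    Finset k[X] :=
  Finset.univ.map ⟨fun a : Fin d → k ↦ X ^ d + ofFn d a,
    (add_right_injective _).comp (injective_ofFn d)⟩

/-- The monic irreducible polynomials over a finite field whose degree divides `j`; none when
`j = 0`. -/
noncomputable def irreducibleMonics (k : Type*) [Field k] [Fintype k] [DecidableEq k] (j : ℕ) :
    Finset k[X] :=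
  open scoped Classical in {P ∈ j.divisors.biUnion (monicsOfDegree k) | Irreducible P}

/-- For a multiplicative weight `w`, the `d`-th coefficient of the Dirichlet series
`∑ w(f) T ^ deg f` over the monic polynomials. -/
noncomputable def monicSum {k R : Type*} [CommRing k] [Fintype k] [DecidableEq k] [CommRing R]
    (w : k[X] →* R) (d : ℕ) : R :=
  ∑ f ∈ monicsOfDegree k d, w f

/-- For a multiplicative weight `w`, the `j`-th coefficient of `T` times the logarithmic derivative
of the Euler product of `∑ w(f) T ^ deg f`. -/
noncomputable def primePowerSum {k R : Type*} [Field k] [Fintype k] [DecidableEq k] [CommRing R]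
    (w : k[X] →* R) (j : ℕ) : R :=
  ∑ P ∈ irreducibleMonics k j, P.natDegree * w (P ^ (j / P.natDegree))

lemma mem_monicsOfDegree {k : Type*} [CommRing k] [Nontrivial k] [Fintype k] [DecidableEq k]
    {d : ℕ} {f : k[X]} : f ∈ monicsOfDegree k d ↔ f.Monic ∧ f.natDegree = d := by
  simp only [monicsOfDegree, Finset.mem_map, Finset.mem_univ, true_and,
    Function.Embedding.coeFn_mk]
  refine ⟨?_, fun ⟨hf, hd⟩ ↦ ⟨fun i ↦ f.coeff i, ?_⟩⟩
  · rintro ⟨a, rfl⟩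
    have hlt : (ofFn d a).degree < (X ^ d : k[X]).degree := by
      rw [degree_X_pow]
      exact ofFn_degree_lt a
    exact ⟨monic_X_pow_add (ofFn_degree_lt a), by
      rw [natDegree_add_eq_left_of_degree_lt hlt, natDegree_X_pow]⟩
  · conv_rhs => rw [hf.as_sum, hd]
    simp only [ofFn_eq_sum_monomial, Finset.sum_range, C_mul_X_pow_eq_monomial]

section Factorization

variable {k : Type*} [Field k] [DecidableEq k]

lemma pow_dvd_iff_le_count_normalizedFactors {f P : k[X]} (hf : f ≠ 0) (hP : P.Monic)
    (hirr : Irreducible P) (n : ℕ) :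
    P ^ n ∣ f ↔ n ≤ (UniqueFactorizationMonoid.normalizedFactors f).count P := by
  rw [pow_dvd_iff_le_emultiplicity,
    UniqueFactorizationMonoid.emultiplicity_eq_count_normalizedFactors hirr hf,
    hP.normalize_eq_self, Nat.cast_le]

lemma natDegree_eq_sum_count_mul_natDegree {f : k[X]} (hf : f.Monic) :
    f.natDegree = ∑ P ∈ (UniqueFactorizationMonoid.normalizedFactors f).toFinset,
      (UniqueFactorizationMonoid.normalizedFactors f).count P * P.natDegree := by
  have hmonic : ∀ P ∈ UniqueFactorizationMonoid.normalizedFactors f, P.Monic :=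
    fun P hP ↦ ((Polynomial.mem_normalizedFactors_iff hf.ne_zero).mp hP).2.1
  conv_lhs => rw [← hf.normalize_eq_self,
    ← UniqueFactorizationMonoid.prod_normalizedFactors_eq hf.ne_zero,
    natDegree_multiset_prod_of_monic _ hmonic, Finset.sum_multiset_map_count]
  simp only [smul_eq_mul]

end Factorization

variable {k : Type*} [Field k] [Fintype k] [DecidableEq k]

lemma mem_irreducibleMonics {j : ℕ} {P : k[X]} :
    P ∈ irreducibleMonics k j ↔ P.Monic ∧ Irreducible P ∧ P.natDegree ∣ j ∧ j ≠ 0 := by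
  simp only [irreducibleMonics, Finset.mem_filter, Finset.mem_biUnion, mem_monicsOfDegree,
    Nat.mem_divisors]
  grind

open scoped Classical in
lemma sum_natDegree_of_pow_dvd {f : k[X]} (hf : f.Monic) :
    ∑ x ∈ (Finset.range (f.natDegree + 1)).sigma (irreducibleMonics k) with
      x.2 ^ (x.1 / x.2.natDegree) ∣ f, x.2.natDegree = f.natDegree := by
  set s := UniqueFactorizationMonoid.normalizedFactors f
  have hmem {P : k[X]} : P ∈ s ↔ Irreducible P ∧ P.Monic ∧ P ∣ f :=
    Polynomial.mem_normalizedFactors_iff hf.ne_zero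
  have hsum : f.natDegree = ∑ x ∈ s.toFinset.sigma fun P ↦ Finset.Icc 1 (s.count P),
      x.1.natDegree := by
    rw [natDegree_eq_sum_count_mul_natDegree hf, Finset.sum_sigma]
    simp only [Finset.sum_const, Nat.card_Icc, add_tsub_cancel_right, smul_eq_mul, s]
  conv_rhs => rw [hsum]
  refine Finset.sum_bij' (fun x _ ↦ ⟨x.2, x.1 / x.2.natDegree⟩)
    (fun x _ ↦ ⟨x.2 * x.1.natDegree, x.1⟩) ?_ ?_ ?_ ?_ fun _ _ ↦ rfl
  · rintro ⟨j, P⟩ hx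
    simp only [Finset.mem_filter, Finset.mem_sigma, mem_irreducibleMonics] at hx
    obtain ⟨⟨-, hP, hirr, hdvd, hj⟩, hpow⟩ := hx
    have hpos : 0 < j / P.natDegree :=
      Nat.div_pos (Nat.le_of_dvd hj.bot_lt hdvd) hirr.natDegree_pos
    rw [Finset.mem_sigma, Multiset.mem_toFinset, hmem, Finset.mem_Icc,
      ← pow_dvd_iff_le_count_normalizedFactors hf.ne_zero hP hirr]
    exact ⟨⟨hirr, hP, (dvd_pow_self P hpos.ne').trans hpow⟩, hpos, hpow⟩
  · rintro ⟨P, n⟩ hx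
    rw [Finset.mem_sigma, Multiset.mem_toFinset, hmem, Finset.mem_Icc] at hx
    obtain ⟨⟨hirr, hP, -⟩, hn, hcount⟩ := hx
    rw [← pow_dvd_iff_le_count_normalizedFactors hf.ne_zero hP hirr] at hcount
    have hle := natDegree_le_of_dvd hcount hf.ne_zero
    rw [natDegree_pow] at hle
    simp only [Finset.mem_filter, Finset.mem_sigma, mem_irreducibleMonics, Finset.mem_range,
      Nat.mul_div_cancel _ hirr.natDegree_pos]
    exact ⟨⟨by lia, hP, hirr, dvd_mul_left .., (mul_pos hn hirr.natDegree_pos).ne'⟩, hcount⟩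
  · rintro ⟨j, P⟩ hx
    simp only [Finset.mem_filter, Finset.mem_sigma, mem_irreducibleMonics] at hx
    rw [Nat.div_mul_cancel hx.1.2.2.2.1]
  · rintro ⟨P, n⟩ hx
    rw [Finset.mem_sigma, Multiset.mem_toFinset, hmem] at hx
    rw [Nat.mul_div_cancel _ hx.1.1.natDegree_pos]

variable {R : Type*} [CommRing R]

open scoped Classical in
lemma sum_monicsOfDegree_of_dvd (w : k[X] →* R) {g : k[X]} (hg : g.Monic) {d : ℕ}
    (hd : g.natDegree ≤ d) :
    ∑ f ∈ monicsOfDegree k d with g ∣ f, w f = w g * monicSum w (d - g.natDegree) := by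
  rw [monicSum, Finset.mul_sum]
  symm
  refine Finset.sum_bij (fun h _ ↦ g * h) (fun h hh ↦ ?_)
    (fun _ _ _ _ ↦ mul_left_cancel₀ hg.ne_zero) (fun f hf ↦ ?_) fun h _ ↦ (map_mul w g h).symm
  · rw [mem_monicsOfDegree] at hh
    rw [Finset.mem_filter, mem_monicsOfDegree, hg.natDegree_mul hh.1]
    exact ⟨⟨hg.mul hh.1, by lia⟩, dvd_mul_right ..⟩
  · rw [Finset.mem_filter, mem_monicsOfDegree] at hf
    obtain ⟨⟨hf, hfd⟩, h, rfl⟩ := hf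
    have hh : h.Monic := hg.of_mul_monic_left hf
    rw [hg.natDegree_mul hh] at hfd
    exact ⟨h, mem_monicsOfDegree.mpr ⟨hh, by lia⟩, rfl⟩

theorem natCast_mul_monicSum (w : k[X] →* R) (d : ℕ) :
    d * monicSum w d =
      ∑ ij ∈ Finset.HasAntidiagonal.antidiagonal d, primePowerSum w ij.1 * monicSum w ij.2 := by
  classical
  rw [Finset.Nat.sum_antidiagonal_eq_sum_range_succ (fun i j ↦ primePowerSum w i * monicSum w j)]
  have hf : ∀ f ∈ monicsOfDegree k d, d * w f =
      ∑ x ∈ (Finset.range (d + 1)).sigma (irreducibleMonics k),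
        if x.2 ^ (x.1 / x.2.natDegree) ∣ f then x.2.natDegree * w f else 0 := fun f hf ↦ by
    obtain ⟨hmonic, rfl⟩ := mem_monicsOfDegree.mp hf
    conv_lhs =>
      rw [← sum_natDegree_of_pow_dvd hmonic, Nat.cast_sum, Finset.sum_mul, Finset.sum_filter]
  rw [monicSum, Finset.mul_sum, Finset.sum_congr rfl hf, Finset.sum_comm, Finset.sum_sigma]
  refine Finset.sum_congr rfl fun j hj ↦ ?_
  rw [primePowerSum, Finset.sum_mul]
  refine Finset.sum_congr rfl fun P hP ↦ ?_
  obtain ⟨hP, -, hdvd, -⟩ := mem_irreducibleMonics.mp hP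
  have hdeg : (P ^ (j / P.natDegree)).natDegree = j := by
    rw [natDegree_pow, Nat.div_mul_cancel hdvd]
  rw [← Finset.sum_filter, ← Finset.mul_sum, sum_monicsOfDegree_of_dvd w (hP.pow _)
    (hdeg.trans_le (Finset.mem_range_succ_iff.mp hj)), hdeg, mul_assoc]

end NewtonIdentity

/-! ### The Euler product attached to a Kloosterman sum -/

section EulerProduct

open Polynomial IntermediateField

section Minpoly

variable {k F : Type*} [Field k] [Field F] [Algebra k F] [FiniteDimensional k F]

lemma natDegree_minpoly_inv (x : F) : (minpoly k x⁻¹).natDegree = (minpoly k x).natDegree := by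
  have hadj : k⟮x⁻¹⟯ = k⟮x⟯ := by
    refine le_antisymm ?_ ?_ <;> rw [adjoin_simple_le_iff]
    · exact inv_mem (mem_adjoin_simple_self k x)
    · simpa only [inv_inv] using inv_mem (mem_adjoin_simple_self k x⁻¹)
  rw [← adjoin.finrank (IsIntegral.of_finite k x⁻¹), hadj,
    adjoin.finrank (IsIntegral.of_finite k x)]

lemma minpoly_inv_eq_C_mul_reverse {x : F} (hx : x ≠ 0) :
    minpoly k x⁻¹ = C ((minpoly k x).coeff 0)⁻¹ * (minpoly k x).reverse := by
  have h0 : (minpoly k x).coeff 0 ≠ 0 := minpoly.coeff_zero_ne_zero (IsIntegral.of_finite k x) hx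
  refine eq_of_monic_of_dvd_of_natDegree_le (minpoly.monic (IsIntegral.of_finite k x⁻¹)) ?_
    (minpoly.dvd k _ ?_) ?_ |>.symm
  · rw [Monic, leadingCoeff_mul, leadingCoeff_C, reverse_leadingCoeff,
      trailingCoeff_eq_coeff_zero h0, inv_mul_cancel₀ h0]
  · have : Invertible x := invertibleOfNonzero hx
    have hroot := (eval₂_reverse_eq_zero_iff (algebraMap k F) x (minpoly k x)).mpr
      (minpoly.aeval k x)
    rw [invOf_eq_inv, ← aeval_def] at hroot
    rw [map_mul, hroot, mul_zero]
  · rw [natDegree_C_mul (inv_ne_zero h0), natDegree_minpoly_inv]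
    exact reverse_natDegree_le _

lemma finrank_div_natDegree_minpoly (x : F) :
    Module.finrank k F / (minpoly k x).natDegree = Module.finrank k⟮x⟯ F := by
  have hx := IsIntegral.of_finite k x
  rw [← Module.finrank_mul_finrank k k⟮x⟯ F, adjoin.finrank hx,
    Nat.mul_div_cancel_left _ (minpoly.natDegree_pos hx)]

lemma natDegree_minpoly_dvd_finrank (x : F) : (minpoly k x).natDegree ∣ Module.finrank k F := by
  rw [← adjoin.finrank (IsIntegral.of_finite k x)]
  exact ⟨_, (Module.finrank_mul_finrank k k⟮x⟯ F).symm⟩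

end Minpoly

section Fibration

variable {k F : Type*} [Field k] [Fintype k] [DecidableEq k] [Field F] [Fintype F] [Algebra k F]

open scoped Classical in
lemma card_filter_minpoly_eq {P : k[X]} (hP : P ∈ irreducibleMonics k (Module.finrank k F)) :
    ({x | minpoly k x = P} : Finset F).card = P.natDegree := by
  obtain ⟨hmonic, hirr, hdeg, -⟩ := mem_irreducibleMonics.mp hP
  have hdvd : P ∣ X ^ Fintype.card F - X := by
    rw [Module.card_eq_pow_finrank (K := k), ← Nat.card_eq_fintype_card]
    exact hirr.natDegree_dvd_iff_dvd_X_pow_card_pow_sub_X.mp hdeg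
  obtain ⟨p, hchar⟩ := CharP.exists F
  have : Fact p.Prime := ⟨CharP.char_is_prime F p⟩
  let : Algebra (ZMod p) F := ZMod.algebra F p
  have hsplits : (P.map (algebraMap k F)).Splits := by
    have hX := FiniteField.splits_X_pow_card_sub_X p (K := F)
    rw [Polynomial.map_sub, Polynomial.map_pow, map_X] at hX
    refine hX.of_dvd (FiniteField.X_pow_card_sub_X_ne_zero _ Fintype.one_lt_card) ?_
    simpa only [Polynomial.map_sub, Polynomial.map_pow, map_X] using
      Polynomial.map_dvd (algebraMap k F) hdvd
  rw [← card_rootSet_eq_natDegree (PerfectField.separable_of_irreducible hirr) hsplits,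
    ← Set.toFinset_card]
  congr 1
  ext x
  rw [Finset.mem_filter_univ, Set.mem_toFinset, mem_rootSet_of_ne hirr.ne_zero]
  exact ⟨fun h ↦ h ▸ minpoly.aeval k x,
    fun h ↦ (minpoly.eq_of_irreducible_of_monic hirr h hmonic).symm⟩

theorem primePowerSum_finrank {R : Type*} [CommRing R] (w : k[X] →* R) :
    primePowerSum w (Module.finrank k F) =
      ∑ x : F, w (minpoly k x ^ (Module.finrank k F / (minpoly k x).natDegree)) := by
  classical
  have hmaps : ∀ x ∈ (Finset.univ : Finset F),
      minpoly k x ∈ irreducibleMonics k (Module.finrank k F) := fun x _ ↦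
    have hx := IsIntegral.of_finite k x
    mem_irreducibleMonics.mpr ⟨minpoly.monic hx, minpoly.irreducible hx,
      natDegree_minpoly_dvd_finrank x, Module.finrank_pos.ne'⟩
  rw [primePowerSum, ← Finset.sum_fiberwise_of_maps_to hmaps]
  refine Finset.sum_congr rfl fun P hP ↦ ?_
  rw [Finset.sum_congr rfl fun x hx ↦ by rw [(Finset.mem_filter.mp hx).2], Finset.sum_const,
    card_filter_minpoly_eq hP, nsmul_eq_mul]

end Fibration

variable {k : Type*} [Field k]

/-- The logarithmic derivative of a polynomial at `0`, with junk value `0` when `f(0) = 0`. -/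
def logDerivZero (f : k[X]) : k := f.coeff 1 / f.coeff 0

lemma logDerivZero_mul {f g : k[X]} (hf : f.coeff 0 ≠ 0) (hg : g.coeff 0 ≠ 0) :
    logDerivZero (f * g) = logDerivZero f + logDerivZero g := by
  simp only [logDerivZero, mul_coeff_zero, mul_coeff_one]
  field_simp
  ring

lemma logDerivZero_C_mul {c : k} (hc : c ≠ 0) (f : k[X]) :
    logDerivZero (C c * f) = logDerivZero f := by
  simp only [logDerivZero, coeff_C_mul, mul_div_mul_left _ _ hc]

lemma logDerivZero_reverse_of_monic {f : k[X]} (hf : f.Monic) :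
    logDerivZero f.reverse = f.nextCoeff := by
  rw [logDerivZero, coeff_one_reverse, coeff_zero_reverse, hf.leadingCoeff, div_one]

/-- The completely multiplicative weight on polynomials whose value at `∏ (X - xᵢ)` with all `xᵢ`
nonzero is `ψ (∑ (m xᵢ + n xᵢ⁻¹))`; it vanishes on the multiples of `X`. -/
noncomputable def kloostermanWeight (ψ : AddChar k ℂ) (m n : k) : k[X] →* ℂ where
  toFun f := open scoped Classical in
    if f.coeff 0 = 0 then 0 else ψ (-(m * logDerivZero f.reverse + n * logDerivZero f))
  map_one' := by
    rw [← C_1, reverse_C]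
    simp [logDerivZero, coeff_one]
  map_mul' f g := by
    rw [mul_coeff_zero]
    by_cases hf : f.coeff 0 = 0
    · simp [hf]
    by_cases hg : g.coeff 0 = 0
    · simp [hg]
    have hrev {h : k[X]} (hh : h.coeff 0 ≠ 0) : h.reverse.coeff 0 ≠ 0 := by
      rw [coeff_zero_reverse, leadingCoeff_ne_zero]
      rintro rfl
      exact hh (coeff_zero 0)
    rw [if_neg (mul_ne_zero hf hg), if_neg hf, if_neg hg, ← AddChar.map_add_eq_mul,
      reverse_mul_of_domain, logDerivZero_mul hf hg, logDerivZero_mul (hrev hf) (hrev hg)]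
    congr 1
    ring

lemma kloostermanWeight_of_coeff_eq_zero (ψ : AddChar k ℂ) (m n : k) {f : k[X]}
    (hf : f.coeff 0 = 0) : kloostermanWeight ψ m n f = 0 :=
  if_pos hf

lemma kloostermanWeight_of_coeff_ne_zero (ψ : AddChar k ℂ) (m n : k) {f : k[X]}
    (hf : f.coeff 0 ≠ 0) : kloostermanWeight ψ m n f =
      ψ (-(m * logDerivZero f.reverse + n * logDerivZero f)) :=
  if_neg hf

section Extension

variable {F : Type*} [Field F] [Algebra k F] [FiniteDimensional k F]

lemma trace_eq_neg_mul_logDerivZero_reverse (x : F) :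
    Algebra.trace k F x =
      -((Module.finrank k F / (minpoly k x).natDegree : ℕ) *
        logDerivZero (minpoly k x).reverse) := by
  rw [trace_eq_finrank_mul_minpoly_nextCoeff, finrank_div_natDegree_minpoly,
    logDerivZero_reverse_of_monic (minpoly.monic (IsIntegral.of_finite k x)), mul_neg]

lemma trace_inv_eq_neg_mul_logDerivZero {x : F} (hx : x ≠ 0) :
    Algebra.trace k F x⁻¹ =
      -((Module.finrank k F / (minpoly k x).natDegree : ℕ) * logDerivZero (minpoly k x)) := by
  have h0 := minpoly.coeff_zero_ne_zero (IsIntegral.of_finite k x⁻¹) (inv_ne_zero hx)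
  rw [trace_eq_neg_mul_logDerivZero_reverse, natDegree_minpoly_inv,
    ← logDerivZero_C_mul (inv_ne_zero h0), ← minpoly_inv_eq_C_mul_reverse (inv_ne_zero hx), inv_inv]

lemma kloostermanWeight_minpoly_pow (ψ : AddChar k ℂ) (m n : k) {x : F} (hx : x ≠ 0) :
    kloostermanWeight ψ m n (minpoly k x ^ (Module.finrank k F / (minpoly k x).natDegree)) =
      ψ (Algebra.trace k F (algebraMap k F m * x + algebraMap k F n * x⁻¹)) := by
  rw [map_pow, kloostermanWeight_of_coeff_ne_zero ψ m n
    (minpoly.coeff_zero_ne_zero (IsIntegral.of_finite k x) hx), ← AddChar.map_nsmul_eq_pow,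
    ← Algebra.smul_def, ← Algebra.smul_def, map_add, LinearMap.map_smul, LinearMap.map_smul,
    trace_eq_neg_mul_logDerivZero_reverse, trace_inv_eq_neg_mul_logDerivZero hx]
  congr 1
  simp only [smul_eq_mul, nsmul_eq_mul]
  ring

end Extension

variable [Fintype k] [DecidableEq k]

theorem primePowerSum_kloostermanWeight_finrank (F : Type*) [Field F] [Fintype F] [DecidableEq F]
    [Algebra k F] (ψ : AddChar k ℂ) (m n : k) :
    primePowerSum (kloostermanWeight ψ m n) (Module.finrank k F) =
      kloostermanSum (ψ.compAddMonoidHom (Algebra.trace k F).toAddMonoidHom)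
        (algebraMap k F m) (algebraMap k F n) := by
  have hzero : kloostermanWeight ψ m n
      (minpoly k (0 : F) ^ (Module.finrank k F / (minpoly k (0 : F)).natDegree)) = 0 := by
    rw [minpoly.zero, natDegree_X, Nat.div_one, map_pow,
      kloostermanWeight_of_coeff_eq_zero ψ m n coeff_X_zero, zero_pow Module.finrank_pos.ne']
  rw [primePowerSum_finrank, kloostermanSum, Fintype.sum_eq_add_sum_subtype_ne _ (0 : F), hzero,
    zero_add, ← Equiv.sum_comp unitsEquivNeZero]
  refine Finset.sum_congr rfl fun u _ ↦ ?_
  rw [Units.val_inv_eq_inv_val]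
  exact kloostermanWeight_minpoly_pow ψ m n u.ne_zero

lemma primePowerSum_kloostermanWeight_one (ψ : AddChar k ℂ) (m n : k) :
    primePowerSum (kloostermanWeight ψ m n) 1 = kloostermanSum ψ m n := by
  rw [← Module.finrank_self k, primePowerSum_kloostermanWeight_finrank k]
  have htrace : ψ.compAddMonoidHom (Algebra.trace k k).toAddMonoidHom = ψ := by
    ext x
    simp
  rw [htrace, Algebra.algebraMap_self_apply, Algebra.algebraMap_self_apply]

end EulerProduct

/-! ### Weil's bound over finite fields of odd characteristic -/

section WeilBound

open Polynomial

lemma monicSum_zero {k R : Type*} [CommRing k] [Nontrivial k] [Fintype k] [DecidableEq k]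
    [CommRing R] (w : k[X] →* R) : monicSum w 0 = 1 := by
  have hone : monicsOfDegree k 0 = {1} := by
    ext f
    rw [mem_monicsOfDegree, Finset.mem_singleton]
    exact ⟨fun h ↦ h.1.natDegree_eq_zero.mp h.2, by rintro rfl; exact ⟨monic_one, natDegree_one⟩⟩
  rw [monicSum, hone, Finset.sum_singleton, map_one]

section MonicSum

variable {k : Type*} [Field k] [Fintype k] [DecidableEq k]

lemma monicSum_kloostermanWeight_add_two (ψ : AddChar k ℂ) (m n : k) (d : ℕ) :
    monicSum (kloostermanWeight ψ m n) (d + 2) = ∑ a : Fin (d + 2) → k,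
      if a 0 = 0 then 0 else ψ (-(m * a (Fin.last (d + 1)) + n * (a 1 / a 0))) := by
  rw [monicSum, monicsOfDegree, Finset.sum_map]
  refine Finset.sum_congr rfl fun a _ ↦ ?_
  set f : k[X] := X ^ (d + 2) + ofFn (d + 2) a with hf
  have hmem : f ∈ monicsOfDegree k (d + 2) := Finset.mem_map.mpr ⟨a, Finset.mem_univ a, rfl⟩
  obtain ⟨hmonic, hdeg⟩ := mem_monicsOfDegree.mp hmem
  have hcoeff (i : Fin (d + 2)) : f.coeff i = a i := by
    rw [hf, coeff_add, coeff_X_pow, if_neg i.2.ne, zero_add, ofFn_coeff_eq_val_of_lt]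
  have h0 : f.coeff 0 = a 0 := hcoeff 0
  have h1 : f.coeff 1 = a 1 := hcoeff 1
  have hlast : f.nextCoeff = a (Fin.last (d + 1)) := by
    rw [nextCoeff_of_natDegree_pos (by lia), hdeg]
    exact hcoeff (Fin.last (d + 1))
  change kloostermanWeight ψ m n f = _
  split_ifs with ha
  · exact kloostermanWeight_of_coeff_eq_zero ψ m n (h0.trans ha)
  · rw [kloostermanWeight_of_coeff_ne_zero ψ m n (by rwa [h0]),
      logDerivZero_reverse_of_monic hmonic, hlast, logDerivZero, h0, h1]

variable {ψ : AddChar k ℂ} {m n : k}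

lemma monicSum_kloostermanWeight_two (hψ : ψ ≠ 1) (hm : m ≠ 0) (hn : n ≠ 0) :
    monicSum (kloostermanWeight ψ m n) 2 = Fintype.card k := by
  have hinner (b : k) : ∑ a : k, (if b = 0 then 0 else ψ (-(m * a + n * (a / b)))) =
      if b = -n / m then (Fintype.card k : ℂ) else 0 := by
    have hnm : -n / m ≠ 0 := div_ne_zero (neg_ne_zero.mpr hn) hm
    rcases eq_or_ne b 0 with rfl | hb
    · simp [hnm.symm]
    have hiff : -(m + n / b) = 0 ↔ b = -n / m := by
      rw [neg_eq_zero, eq_div_iff hm]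
      field_simp
      rw [mul_zero, add_eq_zero_iff_eq_neg]
    have hterm (a : k) : -(m * a + n * (a / b)) = a * -(m + n / b) := by ring
    simp only [if_neg hb, hterm, AddChar.sum_mulShift _ (AddChar.IsPrimitive.of_ne_one hψ), hiff]
    split_ifs <;> simp
  rw [monicSum_kloostermanWeight_add_two, ← (finTwoArrowEquiv k).symm.sum_comp,
    Fintype.sum_prod_type]
  refine (Finset.sum_congr rfl fun b _ ↦ hinner b).trans ?_
  rw [Finset.sum_ite_eq' Finset.univ, if_pos (Finset.mem_univ _)]

-- Shifting the coefficient of `X ^ (d + 2)` multiplies the weight by a fixed value of `ψ`.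
lemma monicSum_kloostermanWeight_add_three (hψ : ψ ≠ 1) (hm : m ≠ 0) (n : k) (d : ℕ) :
    monicSum (kloostermanWeight ψ m n) (d + 3) = 0 := by
  obtain ⟨u, hu⟩ := AddChar.ne_one_iff.mp hψ
  have hshift : monicSum (kloostermanWeight ψ m n) (d + 3) =
      ψ u * monicSum (kloostermanWeight ψ m n) (d + 3) := by
    rw [monicSum_kloostermanWeight_add_two ψ m n (d + 1)]
    conv_lhs => rw [← Equiv.sum_comp (Equiv.addRight (Pi.single (Fin.last (d + 2)) (-u / m)))]
    rw [Finset.mul_sum]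
    refine Finset.sum_congr rfl fun a _ ↦ ?_
    have h0 : (0 : Fin (d + 3)) ≠ Fin.last (d + 2) := by simp [Fin.ext_iff]
    have h1 : (1 : Fin (d + 3)) ≠ Fin.last (d + 2) := by simp [Fin.ext_iff]
    simp only [Equiv.coe_addRight, Pi.add_apply, Pi.single_eq_of_ne h0, Pi.single_eq_of_ne h1,
      Pi.single_eq_same, add_zero, mul_ite, mul_zero, ← AddChar.map_add_eq_mul]
    congr 2
    field_simp
    ring
  by_contra h
  exact hu (mul_right_cancel₀ h (by rw [one_mul, ← hshift]))

end MonicSum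

open Finset.HasAntidiagonal in
lemma eq_neg_pow_add_pow_of_newton {R : Type*} [CommRing R] {c K : ℕ → R} {a b : R}
    (hnewton : ∀ d : ℕ, d * c d = ∑ ij ∈ antidiagonal d, K ij.1 * c ij.2) (h0 : c 0 = 1)
    (h1 : c 1 = -(a + b)) (h2 : c 2 = a * b) (h3 : ∀ d, c (d + 3) = 0) {d : ℕ} (hd : d ≠ 0) :
    K d = -(a ^ d + b ^ d) := by
  have hK0 : K 0 = 0 := by simpa [h0] using (hnewton 0).symm
  have hK1 : K 1 = -(a + b) := by
    simpa [Finset.Nat.antidiagonal_succ, h0, h1, hK0] using (hnewton 1).symm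
  obtain ⟨d, rfl⟩ := Nat.exists_eq_add_one_of_ne_zero hd
  induction d using Nat.twoStepInduction with
  | zero => simpa using hK1
  | one =>
    have h := hnewton 2
    rw [Finset.Nat.sum_antidiagonal_succ', Finset.Nat.sum_antidiagonal_succ'] at h
    simp only [Finset.Nat.antidiagonal_zero, Finset.sum_singleton, zero_add, hK0, hK1, h0, h1, h2,
      Nat.reduceAdd, Nat.cast_ofNat] at h
    linear_combination -h
  | more d ih ih' =>
    have h := hnewton (d + 3)
    rw [h3, mul_zero, Finset.Nat.sum_antidiagonal_succ', Finset.Nat.sum_antidiagonal_succ',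
      Finset.Nat.sum_antidiagonal_succ'] at h
    simp only [h0, h1, h2, h3, ih (by simp), ih' (by simp), mul_zero, Finset.sum_const_zero] at h
    linear_combination -h

lemma norm_le_of_frequently_norm_pow_add_pow_le {𝕜 : Type*} [NormedField 𝕜] {a b : 𝕜} {r C : ℝ}
    (hr : 0 < r) (hab : ‖a‖ * ‖b‖ ≤ r ^ 2)
    (h : ∃ᶠ n : ℕ in Filter.atTop, ‖a ^ n + b ^ n‖ ≤ C * r ^ n) : ‖a‖ ≤ r := by
  by_contra! har
  have hbr : ‖b‖ ≤ r := by nlinarith [norm_nonneg b]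
  have hgrowth := (tendsto_pow_atTop_atTop_of_one_lt ((one_lt_div hr).mpr har)).eventually_gt_atTop
    (C + 1)
  obtain ⟨n, hn, hlt⟩ := (h.and_eventually hgrowth).exists
  have hpow : ‖a‖ ^ n ≤ (C + 1) * r ^ n := calc
    ‖a‖ ^ n = ‖a ^ n + b ^ n - b ^ n‖ := by rw [add_sub_cancel_right, norm_pow]
    _ ≤ ‖a ^ n + b ^ n‖ + ‖b‖ ^ n := (norm_sub_le _ _).trans_eq (by rw [norm_pow b])
    _ ≤ C * r ^ n + r ^ n := by gcongr
    _ = (C + 1) * r ^ n := by ring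
  rw [div_pow, lt_div_iff₀ (by positivity)] at hlt
  exact hlt.not_ge hpow

lemma exists_add_eq_and_mul_eq {K : Type*} [Field K] [IsAlgClosed K] [NeZero (2 : K)] (s t : K) :
    ∃ a b : K, a + b = s ∧ a * b = t := by
  obtain ⟨δ, hδ⟩ := IsAlgClosed.exists_pow_nat_eq (s ^ 2 - 4 * t) two_pos
  have h2 : (2 : K) ≠ 0 := NeZero.ne 2
  refine ⟨(s + δ) / 2, (s - δ) / 2, by field_simp; ring, ?_⟩
  field_simp
  linear_combination -hδ

lemma compAddMonoidHom_trace_ne_one {k M : Type*} [Field k] [CommMonoid M] (F : Type*) [Field F]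
    [Algebra k F] [FiniteDimensional k F] [Algebra.IsSeparable k F] {ψ : AddChar k M} (hψ : ψ ≠ 1) :
    ψ.compAddMonoidHom (Algebra.trace k F).toAddMonoidHom ≠ 1 := by
  obtain ⟨u, hu⟩ := AddChar.ne_one_iff.mp hψ
  obtain ⟨x, hx⟩ := Algebra.trace_surjective k F u
  exact AddChar.ne_one_iff.mpr ⟨x, by simpa [hx] using hu⟩

variable {k : Type*} [Field k] [Fintype k] [DecidableEq k] {ψ : AddChar k ℂ} {m n : k}

lemma norm_primePowerSum_kloostermanWeight_le (hk : ringChar k ≠ 2) (hψ : ψ ≠ 1) (hm : m ≠ 0)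
    (hn : n ≠ 0) {j : ℕ} (hj : 2 ≤ j) :
    ‖primePowerSum (kloostermanWeight ψ m n) (2 * j)‖ ≤
      4 * Fintype.card k * Fintype.card k ^ j + 1 := by
  classical
  obtain ⟨p, hchar⟩ := CharP.exists k
  have : Fact p.Prime := ⟨CharP.char_is_prime k p⟩
  have hj0 : NeZero (2 * j) := ⟨by lia⟩
  obtain ⟨e, -, hq⟩ := FiniteField.card k p
  let F := FiniteField.Extension k p (2 * j)
  let := Fintype.ofFinite F
  have : CharP F p := charP_of_injective_algebraMap (algebraMap k F).injective p
  have hfin : Module.finrank k F = 2 * j := FiniteField.finrank_extension k p (2 * j)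
  have hcard : Fintype.card F = (p ^ (e * j : ℕ)) ^ 2 := by
    rw [Module.card_eq_pow_finrank (K := k), hfin, hq, ← pow_mul, ← pow_mul,
      mul_right_comm, mul_assoc]
  have hodd : Odd (Fintype.card k) := Nat.odd_iff.mpr (FiniteField.odd_card_of_char_ne_two hk)
  have hlt : 2 * Fintype.card k < p ^ (e * j : ℕ) := by
    have h2 := Fintype.one_lt_card (α := k)
    have h3 : 2 < Fintype.card k := by grind
    calc 2 * Fintype.card k < Fintype.card k ^ 2 := by nlinarith
      _ ≤ Fintype.card k ^ j := Nat.pow_le_pow_right (by lia) hj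
      _ = p ^ (e * j : ℕ) := by rw [hq, pow_mul]
  have hfrob (y : F) : Algebra.trace k F (y ^ Fintype.card k) = Algebra.trace k F y :=
    Algebra.trace_eq_of_algEquiv (FiniteField.frobeniusAlgEquivOfAlgebraic k F) y
  have hbound := norm_kloostermanSum_le_of_card_eq_sq hcard (by rw [pow_mul, ← hq]; exact hodd.pow)
    (Fintype.one_lt_card (α := k)) hlt
    (compAddMonoidHom_trace_ne_one F hψ) (fun y ↦ congrArg ψ (hfrob y))
    ((map_ne_zero (algebraMap k F)).mpr hm) ((map_ne_zero (algebraMap k F)).mpr hn)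
  rw [← primePowerSum_kloostermanWeight_finrank F, hfin] at hbound
  refine hbound.trans_eq ?_
  rw [pow_mul, hq]
  push_cast
  rfl

theorem norm_kloostermanSum_le_two_mul_sqrt_of_ne_zero (hk : ringChar k ≠ 2) (hψ : ψ ≠ 1)
    (hm : m ≠ 0) (hn : n ≠ 0) : ‖kloostermanSum ψ m n‖ ≤ 2 * √(Fintype.card k) := by
  set w := kloostermanWeight ψ m n
  obtain ⟨a, b, hsum, hprod⟩ :=
    exists_add_eq_and_mul_eq (-monicSum w 1) (Fintype.card k : ℂ)
  have hpower {i : ℕ} (hi : i ≠ 0) := eq_neg_pow_add_pow_of_newton (natCast_mul_monicSum w)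
    (monicSum_zero w) (by rw [hsum, neg_neg])
    ((monicSum_kloostermanWeight_two hψ hm hn).trans hprod.symm)
    (monicSum_kloostermanWeight_add_three hψ hm n) hi
  have hq : 0 < √(Fintype.card k : ℝ) := Real.sqrt_pos.mpr (by exact_mod_cast Fintype.card_pos)
  have hnorm : ‖a‖ * ‖b‖ = √(Fintype.card k) ^ 2 := by
    rw [← norm_mul, hprod, Complex.norm_natCast, Real.sq_sqrt (Nat.cast_nonneg _)]
  have hfreq : ∃ᶠ i : ℕ in Filter.atTop,
      ‖a ^ i + b ^ i‖ ≤ (4 * Fintype.card k + 1) * √(Fintype.card k) ^ i := by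
    refine Filter.frequently_atTop.mpr fun N ↦ ⟨2 * (N + 2), by lia, ?_⟩
    have hone : (1 : ℝ) ≤ Fintype.card k ^ (N + 2) :=
      one_le_pow₀ (by exact_mod_cast Fintype.card_pos)
    have hbound := norm_primePowerSum_kloostermanWeight_le hk hψ hm hn (j := N + 2) (by lia)
    rw [hpower (by lia), norm_neg] at hbound
    rw [pow_mul (√_), Real.sq_sqrt (Nat.cast_nonneg _)]
    linarith
  have ha := norm_le_of_frequently_norm_pow_add_pow_le hq hnorm.le hfreq
  have hb := norm_le_of_frequently_norm_pow_add_pow_le hq ((mul_comm _ _).trans hnorm).le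
    (by simpa only [add_comm] using hfreq)
  rw [← primePowerSum_kloostermanWeight_one, hpower one_ne_zero, norm_neg, pow_one, pow_one,
    two_mul]
  exact (norm_add_le a b).trans (add_le_add ha hb)

lemma kloostermanSum_zero_right (hψ : ψ ≠ 1) (hm : m ≠ 0) : kloostermanSum ψ m 0 = -1 := by
  have hsum : ∑ x : k, ψ (m * x) = 0 := by
    simpa only [hm, if_false, mul_comm m, Nat.cast_zero] using
      AddChar.sum_mulShift m (AddChar.IsPrimitive.of_ne_one hψ)
  rw [Fintype.sum_eq_add_sum_subtype_ne _ (0 : k), mul_zero, AddChar.map_zero_eq_one,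
    ← Equiv.sum_comp unitsEquivNeZero] at hsum
  simpa only [kloostermanSum, zero_mul, add_zero, unitsEquivNeZero_apply_coe] using
    eq_neg_of_add_eq_zero_right hsum

theorem norm_kloostermanSum_le_two_mul_sqrt (hk : ringChar k ≠ 2) (hψ : ψ ≠ 1)
    (hmn : m ≠ 0 ∨ n ≠ 0) : ‖kloostermanSum ψ m n‖ ≤ 2 * √(Fintype.card k) := by
  have hone : 1 ≤ 2 * √(Fintype.card k : ℝ) := by
    have : 1 ≤ √(Fintype.card k : ℝ) :=
      Real.one_le_sqrt.mpr (by exact_mod_cast Fintype.card_pos)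
    linarith
  rcases eq_or_ne m 0 with rfl | hm
  · rwa [kloostermanSum_comm, kloostermanSum_zero_right hψ (by simpa using hmn), norm_neg, norm_one]
  rcases eq_or_ne n 0 with rfl | hn
  · rwa [kloostermanSum_zero_right hψ hm, norm_neg, norm_one]
  exact norm_kloostermanSum_le_two_mul_sqrt_of_ne_zero hk hψ hm hn

end WeilBound

/-! ### Stationary phase over finite local rings -/

section StationaryPhase

variable {R : Type*} [CommRing R]

/-- The unit `1 + b t`, where `b ^ 3 = 0`. Multiplication by these units moves a point within its
infinitesimal neighbourhood in the stationary phase argument. -/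
def oneAddUnit {b : R} (hb : b ^ 3 = 0) (t : R) : Rˣ where
  val := 1 + b * t
  inv := 1 - b * t + b ^ 2 * t ^ 2
  val_inv := by linear_combination t ^ 3 * hb
  inv_val := by linear_combination t ^ 3 * hb

lemma val_mul_oneAddUnit {b : R} (hb : b ^ 3 = 0) (t : R) (u : Rˣ) :
    ((u * oneAddUnit hb t : Rˣ) : R) = u * (1 + b * t) :=
  rfl

lemma val_inv_mul_oneAddUnit {b : R} (hb : b ^ 3 = 0) (t : R) (u : Rˣ) :
    (((u * oneAddUnit hb t)⁻¹ : Rˣ) : R) = (u⁻¹ : Rˣ) * (1 - b * t + b ^ 2 * t ^ 2) := by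
  rw [mul_inv]
  rfl

variable [Fintype R] [DecidableEq R] {χ : AddChar R ℂ} {m n a b : R}

/-- The critical points modulo the annihilator of `a` of the phase `u ↦ m u + n u⁻¹`, whose
logarithmic derivative is `m u - n u⁻¹`. -/
def criticalUnits (m n a : R) : Finset Rˣ := {u | a * (m * u - n * (u⁻¹ : Rˣ)) = 0}

lemma mem_criticalUnits {u : Rˣ} :
    u ∈ criticalUnits m n a ↔ a * (m * u - n * (u⁻¹ : Rˣ)) = 0 :=
  Finset.mem_filter_univ u

lemma mul_oneAddUnit_mem_criticalUnits (hb : b ^ 3 = 0) (hab : a * b = 0) (t : R) {u : Rˣ} :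
    u * oneAddUnit hb t ∈ criticalUnits m n a ↔ u ∈ criticalUnits m n a := by
  rw [mem_criticalUnits, mem_criticalUnits, val_mul_oneAddUnit, val_inv_mul_oneAddUnit]
  have hphase : a * (m * (u * (1 + b * t)) - n * ((u⁻¹ : Rˣ) * (1 - b * t + b ^ 2 * t ^ 2))) =
      a * (m * u - n * (u⁻¹ : Rˣ)) := by
    linear_combination (m * u * t + n * (u⁻¹ : Rˣ) * t - n * (u⁻¹ : Rˣ) * b * t ^ 2) * hab
  rw [hphase]

lemma sum_criticalUnits_eq_sum_mul (χ : AddChar R ℂ) (hb : b ^ 3 = 0) (hab : a * b = 0) (t : R) :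
    ∑ u ∈ criticalUnits m n a, χ (m * u + n * (u⁻¹ : Rˣ)) =
      ∑ u ∈ criticalUnits m n a, χ (m * u + n * (u⁻¹ : Rˣ)) *
        χ (t * (b * (m * u - n * (u⁻¹ : Rˣ))) + b ^ 2 * (n * (u⁻¹ : Rˣ)) * t ^ 2) := by
  refine (Finset.sum_equiv (Equiv.mulRight (oneAddUnit hb t))
    (fun u ↦ (mul_oneAddUnit_mem_criticalUnits hb hab t).symm) fun u _ ↦ ?_).symm
  rw [← AddChar.map_add_eq_mul, Equiv.coe_mulRight, val_mul_oneAddUnit, val_inv_mul_oneAddUnit]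
  congr 1
  ring

lemma card_mul_sum_criticalUnits (χ : AddChar R ℂ) (hb : b ^ 3 = 0) (hab : a * b = 0) :
    Fintype.card R * ∑ u ∈ criticalUnits m n a, χ (m * u + n * (u⁻¹ : Rˣ)) =
      ∑ u ∈ criticalUnits m n a, χ (m * u + n * (u⁻¹ : Rˣ)) * ∑ t : R,
        χ (t * (b * (m * u - n * (u⁻¹ : Rˣ))) + b ^ 2 * (n * (u⁻¹ : Rˣ)) * t ^ 2) := by
  simp_rw [Finset.mul_sum (s := (Finset.univ : Finset R))]
  rw [Finset.sum_comm, ← Finset.sum_congr rfl fun t _ ↦ sum_criticalUnits_eq_sum_mul χ hb hab t,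
    Finset.sum_const, Finset.card_univ, nsmul_eq_mul]

theorem kloostermanSum_eq_sum_criticalUnits (hχ : χ.IsPrimitive) (m n : R) (ha : a * a = 0) :
    kloostermanSum χ m n = ∑ u ∈ criticalUnits m n a, χ (m * u + n * (u⁻¹ : Rˣ)) := by
  have hcube : a ^ 3 = 0 := by linear_combination a * ha
  have huniv : criticalUnits m n (0 : R) = Finset.univ :=
    Finset.filter_true_of_mem fun _ _ ↦ zero_mul _
  have hsum := card_mul_sum_criticalUnits (m := m) (n := n) χ hcube (zero_mul a)
  simp only [sq a, ha, zero_mul, add_zero, AddChar.sum_mulShift _ hχ, huniv] at hsum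
  have hcard : (Fintype.card R : ℂ) ≠ 0 := Nat.cast_ne_zero.mpr Fintype.card_ne_zero
  refine mul_left_cancel₀ hcard (hsum.trans ?_)
  rw [criticalUnits, Finset.sum_filter, Finset.mul_sum]
  refine Finset.sum_congr rfl fun u _ ↦ ?_
  split_ifs
  · exact mul_comm _ _
  · rw [Nat.cast_zero, mul_zero, mul_zero]

lemma norm_sum_quadratic_sq_le (hχ : χ.IsPrimitive) (β γ : R) :
    ‖∑ t : R, χ (t * β + γ * t ^ 2)‖ ^ 2 ≤
      Fintype.card R * ({x | 2 * γ * x = 0} : Finset R).card := by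
  have hconj : (starRingEnd ℂ) (∑ t : R, χ (t * β + γ * t ^ 2)) =
      ∑ s : R, χ (-(s * β + γ * s ^ 2)) := by
    rw [map_sum]
    exact Finset.sum_congr rfl fun s _ ↦ (AddChar.map_neg_eq_conj χ _).symm
  have hprod : (∑ t : R, χ (t * β + γ * t ^ 2)) * (starRingEnd ℂ) (∑ t : R, χ (t * β + γ * t ^ 2)) =
      ∑ h : R, χ (h * β + γ * h ^ 2) * ∑ s : R, χ (s * (2 * γ * h)) := by
    simp_rw [hconj, Finset.mul_sum]
    rw [Finset.sum_comm (f := fun h s ↦ χ (h * β + γ * h ^ 2) * χ (s * (2 * γ * h)))]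
    refine Finset.sum_congr rfl fun s _ ↦ ?_
    rw [Finset.sum_mul, ← Equiv.sum_comp (Equiv.addRight s)]
    refine Finset.sum_congr rfl fun h _ ↦ ?_
    rw [← AddChar.map_add_eq_mul, ← AddChar.map_add_eq_mul, Equiv.coe_addRight]
    congr 1
    ring
  rw [sq]
  nth_rw 2 [← RCLike.norm_conj]
  rw [← norm_mul, hprod]
  refine (norm_sum_le _ _).trans_eq ?_
  simp only [AddChar.sum_mulShift _ hχ, norm_mul, AddChar.norm_apply, one_mul]
  rw [Finset.card_filter, Nat.cast_sum, Finset.mul_sum]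
  refine Finset.sum_congr rfl fun h _ ↦ ?_
  split_ifs <;> simp

lemma norm_sum_quadratic_le (hχ : χ.IsPrimitive) (h2 : IsUnit (2 : R)) (hn : IsUnit n) (β c : R) :
    ‖∑ t : R, χ (t * β + c * n * t ^ 2)‖ ≤
      √(Fintype.card R * ({x | c * x = 0} : Finset R).card) := by
  refine Real.le_sqrt_of_sq_le ((norm_sum_quadratic_sq_le hχ β (c * n)).trans_eq ?_)
  congr 3
  ext x
  rw [Finset.mem_filter_univ, Finset.mem_filter_univ, ← (h2.mul hn).mul_right_eq_zero (b := c * x)]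
  ring_nf

end StationaryPhase

section LocalRing

variable {R : Type*} [CommRing R] [IsLocalRing R]

lemma isUnit_iff_of_sub_mem_nonunits {x y : R} (h : x - y ∈ nonunits R) :
    IsUnit x ↔ IsUnit y := by
  rw [← not_iff_not]
  refine ⟨fun hx ↦ ?_, fun hy ↦ ?_⟩
  · have hneg : -(x - y) ∈ nonunits R := (IsUnit.neg_iff (x - y)).not.mpr h
    simpa using IsLocalRing.nonunits_add hx hneg
  · simpa using IsLocalRing.nonunits_add h hy

lemma mul_sub_eq_zero_or_mul_add_eq_zero (h2 : IsUnit (2 : R)) {a u v : R} (hu : IsUnit u)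
    (h : a * ((u + v) * (u - v)) = 0) : a * (u - v) = 0 ∨ a * (u + v) = 0 := by
  have hsum : IsUnit (u + v + (u - v)) := by
    rw [add_add_sub_cancel, ← two_mul]
    exact h2.mul hu
  refine (IsLocalRing.isUnit_or_isUnit_of_isUnit_add hsum).imp (fun hadd ↦ ?_) fun hsub ↦ ?_
  · exact hadd.mul_left_eq_zero.mp (by linear_combination h)
  · exact hsub.mul_left_eq_zero.mp (by linear_combination h)

variable [Fintype R] [DecidableEq R] {χ : AddChar R ℂ} {m n a b : R}

lemma isUnit_of_mem_criticalUnits (ha : a ≠ 0) (hmn : IsUnit m ∨ IsUnit n) {u : Rˣ}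
    (hu : u ∈ criticalUnits m n a) : IsUnit m ∧ IsUnit n := by
  have hsub : m * u - n * (u⁻¹ : Rˣ) ∈ nonunits R := fun h ↦
    ha (h.mul_left_eq_zero.mp (mem_criticalUnits.mp hu))
  have hiff : IsUnit m ↔ IsUnit n := by
    simpa only [Units.isUnit_mul_units] using isUnit_iff_of_sub_mem_nonunits hsub
  rw [hiff, or_self] at hmn
  exact ⟨hiff.mpr hmn, hmn⟩

lemma mul_sub_eq_zero_or_mul_add_eq_zero_of_mem_criticalUnits (h2 : IsUnit (2 : R))
    (hm : IsUnit m) {u v : Rˣ} (hu : u ∈ criticalUnits m n a) (hv : v ∈ criticalUnits m n a) :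
    a * ((u : R) - v) = 0 ∨ a * ((u : R) + v) = 0 := by
  refine mul_sub_eq_zero_or_mul_add_eq_zero h2 u.isUnit (hm.mul_right_eq_zero.mp ?_)
  linear_combination (u : R) * mem_criticalUnits.mp hu + a * n * u.mul_inv -
    v * mem_criticalUnits.mp hv - a * n * v.mul_inv

theorem card_criticalUnits_le (h2 : IsUnit (2 : R)) (ha : a ≠ 0) (hmn : IsUnit m ∨ IsUnit n) :
    (criticalUnits m n a).card ≤ 2 * ({x | a * x = 0} : Finset R).card := by
  classical
  rcases (criticalUnits m n a).eq_empty_or_nonempty with h | ⟨v, hv⟩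
  · rw [h, Finset.card_empty]
    exact Nat.zero_le _
  have hm := (isUnit_of_mem_criticalUnits ha hmn hv).1
  have hsub : criticalUnits m n a ⊆
      ({u | a * ((u : R) - v) = 0} : Finset Rˣ) ∪ ({u | a * ((u : R) + v) = 0} : Finset Rˣ) := by
    intro u hu
    rw [Finset.mem_union, Finset.mem_filter_univ, Finset.mem_filter_univ]
    exact mul_sub_eq_zero_or_mul_add_eq_zero_of_mem_criticalUnits h2 hm hu hv
  refine (Finset.card_le_card hsub).trans ((Finset.card_union_le _ _).trans ?_)
  rw [two_mul]
  refine Nat.add_le_add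
    (Finset.card_le_card_of_injOn (fun u : Rˣ ↦ (u : R) - v) (fun u hu ↦ ?_)
      fun x _ y _ h ↦ Units.ext (sub_left_injective h))
    (Finset.card_le_card_of_injOn (fun u : Rˣ ↦ (u : R) + v) (fun u hu ↦ ?_)
      fun x _ y _ h ↦ Units.ext (add_left_injective _ h)) <;>
  simpa using hu

theorem norm_kloostermanSum_le_of_mul_self_eq_zero (hχ : χ.IsPrimitive) (h2 : IsUnit (2 : R))
    (hmn : IsUnit m ∨ IsUnit n) (ha : a * a = 0) (ha0 : a ≠ 0) :
    ‖kloostermanSum χ m n‖ ≤ 2 * ({x | a * x = 0} : Finset R).card := by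
  rw [kloostermanSum_eq_sum_criticalUnits hχ m n ha]
  refine (norm_sum_le _ _).trans ?_
  simp only [AddChar.norm_apply, Finset.sum_const, nsmul_eq_mul, mul_one]
  exact_mod_cast card_criticalUnits_le h2 ha0 hmn

theorem card_mul_norm_kloostermanSum_le_of_pow_three_eq_zero (hχ : χ.IsPrimitive)
    (h2 : IsUnit (2 : R)) (hmn : IsUnit m ∨ IsUnit n) (ha : a * a = 0) (ha0 : a ≠ 0)
    (hab : a * b = 0) (hb : b ^ 3 = 0) :
    Fintype.card R * ‖kloostermanSum χ m n‖ ≤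
      2 * ({x | a * x = 0} : Finset R).card *
        √(Fintype.card R * ({x | b ^ 2 * x = 0} : Finset R).card) := by
  set B := √(Fintype.card R * ({x | b ^ 2 * x = 0} : Finset R).card)
  rw [kloostermanSum_eq_sum_criticalUnits hχ m n ha, ← Complex.norm_natCast, ← norm_mul,
    card_mul_sum_criticalUnits χ hb hab]
  refine (norm_sum_le_of_le (n := fun _ ↦ B) _ fun u hu ↦ ?_).trans ?_
  · have hn := (isUnit_of_mem_criticalUnits ha0 hmn hu).2
    rw [norm_mul, AddChar.norm_apply, one_mul]
    exact norm_sum_quadratic_le hχ h2 (hn.mul u⁻¹.isUnit) _ _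
  · rw [Finset.sum_const, nsmul_eq_mul]
    gcongr
    exact_mod_cast card_criticalUnits_le h2 ha0 hmn

end LocalRing

/-! ### Kloosterman sums modulo prime powers -/

section PrimePower

variable {p k r : ℕ}

lemma isLocalRing_zmod_prime_pow (hp : p.Prime) (hk : k ≠ 0) : IsLocalRing (ZMod (p ^ k)) := by
  have : Fact p.Prime := ⟨hp⟩
  have : Fact (1 < p ^ k) := ⟨Nat.one_lt_pow hk hp.one_lt⟩
  exact IsLocalRing.of_surjective' (PadicInt.toZModPow (p := p) k) (ZMod.ringHom_surjective _)

lemma isUnit_intCast_zmod_prime_pow_iff (hp : p.Prime) (hk : k ≠ 0) (z : ℤ) :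
    IsUnit (z : ZMod (p ^ k)) ↔ ¬ (p : ℤ) ∣ z := by
  rw [ZMod.coe_int_isUnit_iff_isCoprime, Nat.cast_pow, IsCoprime.pow_left_iff (by lia),
    (Nat.prime_iff_prime_int.mp hp).coprime_iff_not_dvd]

lemma isUnit_two_zmod_prime_pow (hp : p.Prime) (hp2 : p ≠ 2) : IsUnit (2 : ZMod (p ^ k)) :=
  (ZMod.isUnit_iff_coprime 2 (p ^ k)).mpr
    (((Nat.coprime_primes Nat.prime_two hp).mpr hp2.symm).pow_right k)

lemma natCast_pow_zmod_pow_eq_zero_iff (hp : p.Prime) {j : ℕ} :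
    (p : ZMod (p ^ k)) ^ j = 0 ↔ k ≤ j := by
  rw [← Nat.cast_pow, ZMod.natCast_eq_zero_iff, Nat.pow_dvd_pow_iff_le_right hp.one_lt]

lemma card_annihilator_pow_le [NeZero (p ^ k)] (hp : p.Prime) (j : ℕ) :
    ({x | (p : ZMod (p ^ k)) ^ j * x = 0} : Finset (ZMod (p ^ k))).card ≤ p ^ j := by
  simpa only [nsmul_eq_mul, Nat.cast_pow] using
    IsAddCyclic.card_nsmul_eq_zero_le (α := ZMod (p ^ k)) (pow_pos hp.pos j)

theorem norm_kloostermanSum_zmod_pow_two_mul_le [NeZero (p ^ (2 * r))]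
    {χ : AddChar (ZMod (p ^ (2 * r))) ℂ} (hχ : χ.IsPrimitive) (hp : p.Prime) (hp2 : p ≠ 2)
    (hr : r ≠ 0) {m n : ZMod (p ^ (2 * r))} (hmn : IsUnit m ∨ IsUnit n) :
    ‖kloostermanSum χ m n‖ ≤ 2 * √(p ^ (2 * r) : ℕ) := by
  have : IsLocalRing (ZMod (p ^ (2 * r))) := isLocalRing_zmod_prime_pow hp (by lia)
  have hbound := norm_kloostermanSum_le_of_mul_self_eq_zero hχ (isUnit_two_zmod_prime_pow hp hp2)
    hmn (a := (p : ZMod (p ^ (2 * r))) ^ r)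
    (by rw [← pow_add, natCast_pow_zmod_pow_eq_zero_iff hp]; lia)
    (by rw [Ne, natCast_pow_zmod_pow_eq_zero_iff hp]; lia)
  have hsqrt : √(p ^ (2 * r) : ℕ) = (p ^ r : ℕ) := by
    rw [mul_comm, pow_mul, Nat.cast_pow (p ^ r), Real.sqrt_sq (Nat.cast_nonneg _)]
  rw [hsqrt]
  exact hbound.trans (by gcongr; exact card_annihilator_pow_le hp r)

theorem norm_kloostermanSum_zmod_pow_two_mul_add_one_le [NeZero (p ^ (2 * r + 1))]
    {χ : AddChar (ZMod (p ^ (2 * r + 1))) ℂ} (hχ : χ.IsPrimitive) (hp : p.Prime) (hp2 : p ≠ 2)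
    (hr : r ≠ 0) {m n : ZMod (p ^ (2 * r + 1))} (hmn : IsUnit m ∨ IsUnit n) :
    ‖kloostermanSum χ m n‖ ≤ 2 * √(p ^ (2 * r + 1) : ℕ) := by
  set q : ℝ := ((p ^ (2 * r + 1) : ℕ) : ℝ) with hq
  have hqpos : 0 < q := Nat.cast_pos.mpr (NeZero.pos _)
  have : IsLocalRing (ZMod (p ^ (2 * r + 1))) := isLocalRing_zmod_prime_pow hp (by lia)
  have hbound := card_mul_norm_kloostermanSum_le_of_pow_three_eq_zero hχ
    (isUnit_two_zmod_prime_pow hp hp2) hmn (a := (p : ZMod (p ^ (2 * r + 1))) ^ (r + 1))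
    (b := (p : ZMod (p ^ (2 * r + 1))) ^ r)
    (by rw [← pow_add, natCast_pow_zmod_pow_eq_zero_iff hp]; lia)
    (by rw [Ne, natCast_pow_zmod_pow_eq_zero_iff hp]; lia)
    (by rw [← pow_add, natCast_pow_zmod_pow_eq_zero_iff hp]; lia)
    (by rw [← pow_mul, natCast_pow_zmod_pow_eq_zero_iff hp]; lia)
  rw [ZMod.card, ← pow_mul, ← hq] at hbound
  refine le_of_mul_le_mul_left ?_ hqpos
  calc q * ‖kloostermanSum χ m n‖
      ≤ 2 * (p ^ (r + 1) : ℕ) * √(q * (p ^ (r * 2) : ℕ)) := by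
        refine hbound.trans ?_
        gcongr <;> exact card_annihilator_pow_le hp _
    _ = 2 * (p ^ (r + 1) : ℕ) * (√q * (p ^ r : ℕ)) := by
        rw [pow_mul, Nat.cast_pow (p ^ r), Real.sqrt_mul hqpos.le, Real.sqrt_sq (Nat.cast_nonneg _)]
    _ = q * (2 * √q) := by
        rw [hq]
        push_cast
        ring

theorem norm_kloostermanSum_zmod_prime_le [NeZero p] {χ : AddChar (ZMod p) ℂ}
    (hχ : χ.IsPrimitive) (hp : p.Prime) (hp2 : p ≠ 2) {m n : ZMod p} (hmn : IsUnit m ∨ IsUnit n) :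
    ‖kloostermanSum χ m n‖ ≤ 2 * √p := by
  have : Fact p.Prime := ⟨hp⟩
  have hne : χ ≠ 1 := by simpa only [AddChar.mulShift_one] using hχ one_ne_zero
  have hbound := norm_kloostermanSum_le_two_mul_sqrt (by rwa [ZMod.ringChar_zmod_n]) hne
    (hmn.imp IsUnit.ne_zero IsUnit.ne_zero)
  rwa [ZMod.card] at hbound

theorem norm_kloostermanSum_zmod_prime_pow_le [NeZero (p ^ k)] {χ : AddChar (ZMod (p ^ k)) ℂ}
    (hχ : χ.IsPrimitive) (hp : p.Prime) (hp2 : p ≠ 2) (hk : k ≠ 0) {m n : ZMod (p ^ k)}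
    (hmn : IsUnit m ∨ IsUnit n) : ‖kloostermanSum χ m n‖ ≤ 2 * √(p ^ k : ℕ) := by
  obtain ⟨r, rfl | rfl⟩ := Nat.even_or_odd' k
  · exact norm_kloostermanSum_zmod_pow_two_mul_le hχ hp hp2 (by lia) hmn
  rcases eq_or_ne r 0 with rfl | hr
  · generalize hc : p ^ (2 * 0 + 1) = c at *
    obtain rfl : p = c := (pow_one p).symm.trans hc
    exact norm_kloostermanSum_zmod_prime_le hχ hp hp2 hmn
  · exact norm_kloostermanSum_zmod_pow_two_mul_add_one_le hχ hp hp2 hr hmn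

end PrimePower

/-! ### Multiplicativity and Estermann's bound -/

section Modulus

variable {c d : ℕ} [NeZero c] [NeZero d]

lemma stdAddChar_natCast_mul [NeZero (c * d)] (x : ZMod (c * d)) :
    ZMod.stdAddChar ((c : ZMod (c * d)) * x) =
      ZMod.stdAddChar (ZMod.castHom (Dvd.intro_left c rfl) (ZMod d) x) := by
  obtain ⟨z, rfl⟩ := ZMod.intCast_surjective x
  have hc : (c : ℂ) ≠ 0 := Nat.cast_ne_zero.mpr (NeZero.ne c)
  rw [map_intCast, ← Int.cast_natCast (R := ZMod (c * d)), ← Int.cast_mul, ZMod.stdAddChar_coe,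
    ZMod.stdAddChar_coe]
  push_cast
  field_simp

lemma stdAddChar_eq_mul [NeZero (c * d)] {s t : ℤ} (hst : s * d + t * c = 1) (hcd : c.Coprime d)
    (x : ZMod (c * d)) :
    ZMod.stdAddChar x =
      ZMod.stdAddChar.mulShift (s : ZMod c) (ZMod.chineseRemainder hcd x).1 *
        ZMod.stdAddChar.mulShift (t : ZMod d) (ZMod.chineseRemainder hcd x).2 := by
  obtain ⟨z, rfl⟩ := ZMod.intCast_surjective x
  have hc : (c : ℂ) ≠ 0 := Nat.cast_ne_zero.mpr (NeZero.ne c)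
  have hd : (d : ℂ) ≠ 0 := Nat.cast_ne_zero.mpr (NeZero.ne d)
  rw [map_intCast (ZMod.chineseRemainder hcd), AddChar.mulShift_apply, AddChar.mulShift_apply,
    Prod.fst_intCast, Prod.snd_intCast, ← Int.cast_mul, ← Int.cast_mul, ZMod.stdAddChar_coe,
    ZMod.stdAddChar_coe, ZMod.stdAddChar_coe, ← Complex.exp_add]
  congr 1
  have hst' : (s : ℂ) * d + t * c = 1 := by exact_mod_cast hst
  push_cast
  field_simp
  linear_combination -(z : ℂ) * hst'

lemma kloostermanSum_stdAddChar_mul [NeZero (c * d)] {s t : ℤ} (hst : s * d + t * c = 1)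
    (hcd : c.Coprime d) (m n : ℤ) :
    kloostermanSum (ZMod.stdAddChar (N := c * d)) m n =
      kloostermanSum (ZMod.stdAddChar (N := c)) (s * m : ℤ) (s * n : ℤ) *
        kloostermanSum (ZMod.stdAddChar (N := d)) (t * m : ℤ) (t * n : ℤ) := by
  rw [kloostermanSum_eq_mul_of_ringEquiv_prod _ _ (ZMod.chineseRemainder hcd)
    (stdAddChar_eq_mul hst hcd), kloostermanSum_mulShift, kloostermanSum_mulShift]
  simp only [map_intCast, Prod.fst_intCast, Prod.snd_intCast, Int.cast_mul]

lemma totient_mul_kloostermanSum_stdAddChar [NeZero (c * d)] (m n : ℤ) :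
    d.totient * kloostermanSum (ZMod.stdAddChar (N := c * d)) (c * m : ℤ) (c * n : ℤ) =
      (c * d).totient * kloostermanSum (ZMod.stdAddChar (N := d)) m n := by
  have hlift := card_mul_kloostermanSum_of_surjective (m : ZMod (c * d)) (n : ZMod (c * d))
    (ZMod.unitsMap_surjective (Dvd.intro_left c rfl : d ∣ c * d)) stdAddChar_natCast_mul
  simpa only [ZMod.card_units_eq_totient, map_intCast, Int.cast_mul, Int.cast_natCast] using hlift

end Modulus

lemma totient_prime_mul_le {p : ℕ} (hp : p.Prime) (d : ℕ) :
    (p * d).totient ≤ p * d.totient := by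
  by_cases h : p ∣ d
  · exact (Nat.totient_mul_of_prime_of_dvd hp h).le
  · rw [Nat.totient_mul_of_prime_of_not_dvd hp h]
    exact Nat.mul_le_mul_right _ (Nat.sub_le p 1)

lemma norm_kloostermanSum_stdAddChar_prime_mul_le {p d : ℕ} [NeZero d] [NeZero (p * d)]
    (hp : p.Prime) (m n : ℤ) :
    ‖kloostermanSum (ZMod.stdAddChar (N := p * d)) (p * m : ℤ) (p * n : ℤ)‖ ≤
      p * ‖kloostermanSum (ZMod.stdAddChar (N := d)) m n‖ := by
  have : NeZero p := ⟨hp.ne_zero⟩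
  have hpos : (0 : ℝ) < d.totient := Nat.cast_pos.mpr (Nat.totient_pos.mpr (NeZero.pos d))
  have hnorm := congrArg norm (totient_mul_kloostermanSum_stdAddChar (c := p) (d := d) m n)
  rw [norm_mul, norm_mul, Complex.norm_natCast, Complex.norm_natCast] at hnorm
  refine le_of_mul_le_mul_left (hnorm.trans_le ?_) hpos
  rw [mul_left_comm, ← mul_assoc]
  gcongr
  exact_mod_cast totient_prime_mul_le hp d

/-- Estermann's bound for all Kloosterman sums to the modulus `c`, in terms of
`kloostermanSum`. The case `c = 0` is excluded by the instance argument. -/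
def SatisfiesEstermannBound (c : ℕ) : Prop :=
  ∀ [NeZero c] (m n : ℤ), ‖kloostermanSum (ZMod.stdAddChar (N := c)) m n‖ ≤
    √c * √((m.gcd n).gcd c : ℕ) * 2 ^ c.primeFactors.card

lemma norm_kloostermanSum_stdAddChar_le_totient {c : ℕ} [NeZero c] (m n : ZMod c) :
    ‖kloostermanSum (ZMod.stdAddChar (N := c)) m n‖ ≤ c.totient := by
  simpa only [ZMod.card_units_eq_totient] using norm_kloostermanSum_le_card ZMod.stdAddChar m n

lemma satisfiesEstermannBound_one : SatisfiesEstermannBound 1 := fun m n ↦ by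
  simpa using norm_kloostermanSum_stdAddChar_le_totient (c := 1) m n

lemma two_mul_sqrt_le_estermannBound {p k : ℕ} (hp : p.Prime) (hk : k ≠ 0) (g : ℕ) :
    2 * √(p ^ k : ℕ) ≤ √(p ^ k : ℕ) * √(g.gcd (p ^ k) : ℕ) * 2 ^ (p ^ k).primeFactors.card := by
  have hgcd : 1 ≤ √(g.gcd (p ^ k) : ℕ) :=
    Real.one_le_sqrt.mpr (Nat.one_le_cast.mpr (Nat.gcd_pos_of_pos_right g (pow_pos hp.pos k)))
  rw [Nat.primeFactors_prime_pow hk hp, Finset.card_singleton, pow_one, mul_comm]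
  gcongr
  exact le_mul_of_one_le_right (Real.sqrt_nonneg _) hgcd

lemma SatisfiesEstermannBound.prime_mul {p d : ℕ} (hd : SatisfiesEstermannBound d) (hp : p.Prime)
    [NeZero (p * d)] (m n : ℤ) :
    ‖kloostermanSum (ZMod.stdAddChar (N := p * d)) (p * m : ℤ) (p * n : ℤ)‖ ≤
      √(p * d : ℕ) * √(((p * m).gcd (p * n)).gcd (p * d) : ℕ) * 2 ^ (p * d).primeFactors.card := by
  have hd0 : d ≠ 0 := right_ne_zero_of_mul (NeZero.ne (p * d))
  have : NeZero d := ⟨hd0⟩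
  have hω : d.primeFactors.card ≤ (p * d).primeFactors.card :=
    Finset.card_le_card (Nat.primeFactors_mono (Dvd.intro_left p rfl) (NeZero.ne (p * d)))
  calc ‖kloostermanSum (ZMod.stdAddChar (N := p * d)) (p * m : ℤ) (p * n : ℤ)‖
      ≤ p * (√d * √((m.gcd n).gcd d : ℕ) * 2 ^ d.primeFactors.card) :=
        (norm_kloostermanSum_stdAddChar_prime_mul_le hp m n).trans (by gcongr; exact hd m n)
    _ = √(p * d : ℕ) * √(p * (m.gcd n).gcd d : ℕ) * 2 ^ d.primeFactors.card := by
        rw [Nat.cast_mul, Nat.cast_mul, Real.sqrt_mul p.cast_nonneg, Real.sqrt_mul p.cast_nonneg]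
        linear_combination -(√d * √((m.gcd n).gcd d : ℕ) * 2 ^ d.primeFactors.card) *
          Real.mul_self_sqrt p.cast_nonneg
    _ ≤ _ := by
        rw [Int.gcd_mul_left, Int.natAbs_natCast, Nat.gcd_mul_left]
        gcongr
        exact one_le_two

theorem satisfiesEstermannBound_odd_prime_pow {p : ℕ} (hp : p.Prime) (hp2 : p ≠ 2) (k : ℕ) :
    SatisfiesEstermannBound (p ^ k) := by
  induction k with
  | zero => exact satisfiesEstermannBound_one
  | succ k ih =>
    intro _ m n
    by_cases h : (p : ℤ) ∣ m ∧ (p : ℤ) ∣ n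
    · obtain ⟨⟨m, rfl⟩, n, rfl⟩ := h
      generalize hc : p ^ (k + 1) = c at *
      obtain rfl : p * p ^ k = c := (pow_succ' p k).symm.trans hc
      exact ih.prime_mul hp m n
    · have hunit : IsUnit (m : ZMod (p ^ (k + 1))) ∨ IsUnit (n : ZMod (p ^ (k + 1))) := by
        rwa [isUnit_intCast_zmod_prime_pow_iff hp k.succ_ne_zero,
          isUnit_intCast_zmod_prime_pow_iff hp k.succ_ne_zero, ← not_and_or]
      exact (norm_kloostermanSum_zmod_prime_pow_le (ZMod.isPrimitive_stdAddChar _) hp hp2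
        k.succ_ne_zero hunit).trans (two_mul_sqrt_le_estermannBound hp k.succ_ne_zero _)

theorem satisfiesEstermannBound_two_pow {k : ℕ} (hk : k ≤ 4) : SatisfiesEstermannBound (2 ^ k) := by
  rcases k with _ | k
  · exact satisfiesEstermannBound_one
  intro _ m n
  refine (norm_kloostermanSum_stdAddChar_le_totient _ _).trans
    (le_trans ?_ (two_mul_sqrt_le_estermannBound Nat.prime_two k.succ_ne_zero _))
  have hpow : ((2 : ℝ) ^ k) ^ 2 ≤ 2 ^ 2 * 2 ^ (k + 1) := by
    rw [← pow_mul, ← pow_add]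
    exact pow_le_pow_right₀ one_le_two (by lia)
  rw [Nat.totient_prime_pow_succ Nat.prime_two, Nat.add_one_sub_one, mul_one,
    Nat.cast_pow, Nat.cast_pow, Nat.cast_ofNat]
  refine (Real.le_sqrt_of_sq_le hpow).trans_eq ?_
  rw [Real.sqrt_mul (by positivity), Real.sqrt_sq zero_le_two]

lemma gcd_mul_left_gcd_of_isCoprime {s : ℤ} {c : ℕ} (hs : IsCoprime s c) (m n : ℤ) :
    ((s * m).gcd (s * n)).gcd c = (m.gcd n).gcd c := by
  rw [Int.gcd_mul_left]
  exact Nat.Coprime.gcd_mul_left_cancel _ (Int.isCoprime_iff_gcd_eq_one.mp hs)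

theorem SatisfiesEstermannBound.mul {c d : ℕ} (hc : SatisfiesEstermannBound c)
    (hd : SatisfiesEstermannBound d) (hcd : c.Coprime d) : SatisfiesEstermannBound (c * d) := by
  intro _ m n
  have : NeZero c := ⟨left_ne_zero_of_mul (NeZero.ne (c * d))⟩
  have : NeZero d := ⟨right_ne_zero_of_mul (NeZero.ne (c * d))⟩
  obtain ⟨t, s, hts⟩ : IsCoprime (c : ℤ) d := Nat.isCoprime_iff_coprime.mpr hcd
  have hst : s * d + t * c = 1 := (add_comm _ _).trans hts
  have hs := hc (s * m) (s * n)
  have ht := hd (t * m) (t * n)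
  rw [gcd_mul_left_gcd_of_isCoprime ⟨d, t, by linear_combination hst⟩] at hs
  rw [gcd_mul_left_gcd_of_isCoprime ⟨c, s, by linear_combination hst⟩] at ht
  rw [kloostermanSum_stdAddChar_mul hst hcd, norm_mul]
  refine (mul_le_mul hs ht (norm_nonneg _) (by positivity)).trans_eq ?_
  rw [hcd.gcd_mul, hcd.primeFactors_mul, Finset.card_union_of_disjoint hcd.disjoint_primeFactors,
    pow_add, Nat.cast_mul, Nat.cast_mul, Real.sqrt_mul (Nat.cast_nonneg _),
    Real.sqrt_mul (Nat.cast_nonneg _)]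
  ring

theorem satisfiesEstermannBound_of_not_dvd {c : ℕ} (h32 : ¬ 32 ∣ c) :
    SatisfiesEstermannBound c := by
  induction c using Nat.recOnPosPrimePosCoprime with
  | zero => exact absurd (dvd_zero 32) h32
  | one => exact satisfiesEstermannBound_one
  | prime_pow p k hp _ =>
    rcases eq_or_ne p 2 with rfl | hp2
    · refine satisfiesEstermannBound_two_pow ?_
      by_contra! hk
      exact h32 (pow_dvd_pow 2 (show 5 ≤ k from hk))
    · exact satisfiesEstermannBound_odd_prime_pow hp hp2 k
  | coprime c d _ _ hcd ihc ihd =>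
    exact SatisfiesEstermannBound.mul (ihc fun h ↦ h32 (h.mul_right d))
      (ihd fun h ↦ h32 (h.mul_left c)) hcd

lemma Kloosterman_eq_re_kloostermanSum (m n : ℤ) (c : ℕ) [NeZero c] :
    Kloosterman m n c = (kloostermanSum (ZMod.stdAddChar (N := c)) m n).re := by
  rw [Kloosterman, kloostermanSum, Complex.re_sum]
  refine (Finset.sum_bij (fun (u : (ZMod c)ˣ) _ ↦ (u : ZMod c).val) (fun u _ ↦ ?_)
    (fun u _ v _ h ↦ ?_) (fun a ha ↦ ?_) fun u _ ↦ ?_).symm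
  · rw [Finset.mem_filter, Finset.mem_range]
    exact ⟨ZMod.val_lt _, ZMod.val_coe_unit_coprime u⟩
  · exact Units.ext (ZMod.val_injective c h)
  · obtain ⟨hlt, hcop⟩ : a < c ∧ a.Coprime c := by
      rwa [Finset.mem_filter, Finset.mem_range] at ha
    exact ⟨ZMod.unitOfCoprime a hcop, Finset.mem_univ _, ZMod.val_natCast_of_lt hlt⟩
  · have hphase : (m : ZMod c) * u + n * (u⁻¹ : (ZMod c)ˣ) =
        (m * ((u : ZMod c).val : ℕ) + n * ((((u : ZMod c).val : ZMod c)⁻¹).val : ℤ) : ℤ) := by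
      push_cast
      rw [ZMod.natCast_zmod_val, ZMod.natCast_zmod_val, ZMod.inv_coe_unit]
    rw [hphase, ZMod.stdAddChar_coe, mul_div_assoc]

/-- Estermann's bound for Kloosterman sums with modulus not divisible by 32. -/
theorem estermann_bound (c : ℕ) (hc : 0 < c) (h32 : ¬ (32 ∣ c)) (m n : ℤ) :
    |Kloosterman m n c| ≤
      Real.sqrt c * Real.sqrt (Int.gcd m (Int.gcd n (c : ℤ))) *
        2 ^ c.primeFactors.card := by
  have : NeZero c := ⟨hc.ne'⟩
  have hgcd : m.gcd (n.gcd c) = (m.gcd n).gcd c := (Nat.gcd_assoc _ _ _).symm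
  rw [Kloosterman_eq_re_kloostermanSum, hgcd]
  exact (Complex.abs_re_le_norm _).trans (satisfiesEstermannBound_of_not_dvd h32 m n)
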